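/- arXiv:1801.03508 — 2 statements merged into one kernel-verified Lean document; each statement's English description precedes it below -/
import Mathlib

section
/- For every n ≥ 1 and every dimension vector d : Fin n → ℕ with 1 ≤ d i for all i, LME states exist for d if and only if R(d) ≥ 0. -/
open scoped ComplexConjugate

noncomputable section

def rhoK {n : ℕ} (d : Fin n → ℕ) (ψ : (∀ i, Fin (d i)) → ℂ) (k : Fin n) :
    Matrix (Fin (d k)) (Fin (d k)) ℂ :=
  Matrix.of fun j l =>
    ∑ x : ∀ i, Fin (d i), if x k = j then ψ x * conj (ψ (Function.update x k l)) else 0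

def Normalized {n : ℕ} {d : Fin n → ℕ} (ψ : (∀ i, Fin (d i)) → ℂ) : Prop :=
  ∑ x, ‖ψ x‖ ^ 2 = 1

def IsLME {n : ℕ} (d : Fin n → ℕ) (ψ : (∀ i, Fin (d i)) → ℂ) : Prop :=
  Normalized ψ ∧ ∀ k, rhoK d ψ k = (1 / (d k : ℂ)) • 1

def LMEExists (n : ℕ) (d : Fin n → ℕ) : Prop := ∃ ψ, IsLME d ψ

def Nfun {n : ℕ} (k : Fin n → ℕ) : ℤ :=
  ∑ S ∈ Finset.univ.powerset.filter (fun S : Finset (Fin n) => S.Nonempty),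
    (-1 : ℤ) ^ (S.card + 1) * ((Finset.gcd S k : ℕ) : ℤ)

def Rfun {n : ℕ} (d : Fin n → ℕ) : ℤ :=
  (∏ i, (d i : ℤ)) - Nfun (fun i => (d i) ^ 2)

def Dfun {n : ℕ} (d : Fin n → ℕ) : ℤ :=
  (∏ i, (d i : ℤ)) - 1 - ∑ i, ((d i : ℤ) ^ 2 - 1)

/-!
Cut the system into one factor of dimension `c` and the rest. A pure state is locally maximally
entangled iff, up to scaling, it is an isometry from `ℂ ^ c` onto a subspace of the rest whose
orthogonal projection `P` has scalar marginals. Passing to `1 - P` replaces `c` by the complementary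
dimension (castling), and regrouping the rest shows that a state which is locally maximally
entangled for merged factors is so for the original ones.

On the arithmetic side, `Nfun k` is the sum of `φ e` over all `e` dividing some `k i`. Hence `Rfun`
is invariant under castling, does not increase when factors are merged, and is negative when one
factor is larger than all others together.

Castling decreases `∑ d i` until one factor equals the product of the others or each factor is at
most half the product of the others. In the latter case a merging into three blocks with minimal sum
is again within a few castlings of `a ≤ b ≤ c ≤ a * b / 2`. There a projection is built from
cyclically shifted blocks whose diagonals are prescribed, and such blocks exist because every vector
with entries in `[0, 1]` and integral sum is the diagonal of a projection.
-/

open Finset Matrix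
open Fintype (card)

/-! ### Marginals of matrices on tensor products -/

section Marginal

variable {ι : Type*} [Fintype ι] [DecidableEq ι]
  {A B : ι → Type*} [∀ i, Fintype (A i)] [∀ i, DecidableEq (A i)]
  [∀ i, Fintype (B i)] [∀ i, DecidableEq (B i)]

/-- The reduced matrix of an operator `M` on the tensor product of the spaces `ℂ ^ A i`: the
partial trace of `M` over all tensor factors other than the `k`-th. -/
def marginal (k : ι) : Matrix (∀ i, A i) (∀ i, A i) ℂ →ₗ[ℂ] Matrix (A k) (A k) ℂ where
  toFun M := of fun p q => ∑ x, if x k = p then M x (Function.update x k q) else 0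
  map_add' M N := by ext; simp [← sum_add_distrib, ite_add_zero]
  map_smul' c M := by ext; simp [mul_sum]

lemma marginal_apply (k : ι) (M : Matrix (∀ i, A i) (∀ i, A i) ℂ) (p q : A k) :
    marginal k M p q = ∑ x, if x k = p then M x (Function.update x k q) else 0 :=
  rfl

lemma trace_marginal (k : ι) (M : Matrix (∀ i, A i) (∀ i, A i) ℂ) :
    (marginal k M).trace = M.trace := by
  simp only [trace, diag_apply, marginal_apply]
  rw [sum_comm]
  simp

lemma marginal_submatrix_piCongrRight (e : ∀ i, A i ≃ B i) (k : ι)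
    (M : Matrix (∀ i, B i) (∀ i, B i) ℂ) :
    marginal k (M.submatrix (Equiv.piCongrRight e) (Equiv.piCongrRight e)) =
      (marginal k M).submatrix (e k) (e k) := by
  ext p q
  simp only [marginal_apply, submatrix_apply]
  refine Fintype.sum_equiv (Equiv.piCongrRight e) _ _ fun x => ?_
  have update_map : Equiv.piCongrRight e (Function.update x k q) =
      Function.update (Equiv.piCongrRight e x) k (e k q) := by
    ext i
    exact Function.apply_update (fun i => e i) x k q i
  simp [update_map]

/-- All reduced matrices of `M` are scalar. The scalar is then determined by the trace of `M`, see
`HasUniformMarginals.marginal_eq`. -/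
def HasUniformMarginals (M : Matrix (∀ i, A i) (∀ i, A i) ℂ) : Prop :=
  ∀ k, ∃ c : ℂ, marginal k M = c • 1

namespace HasUniformMarginals

lemma marginal_eq {M : Matrix (∀ i, A i) (∀ i, A i) ℂ} (hM : HasUniformMarginals M) (k : ι) :
    marginal k M = (M.trace / card (A k)) • 1 := by
  obtain ⟨c, hc⟩ := hM k
  have htrace := trace_marginal k M
  rw [hc, trace_smul, trace_one, smul_eq_mul] at htrace
  rcases isEmpty_or_nonempty (A k) with hA | hA
  · exact Subsingleton.elim _ _
  · rw [hc, ← htrace, mul_div_cancel_right₀ _ (by simp)]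

lemma smul {M : Matrix (∀ i, A i) (∀ i, A i) ℂ} (hM : HasUniformMarginals M) (r : ℂ) :
    HasUniformMarginals (r • M) := fun k => by
  obtain ⟨c, hc⟩ := hM k
  exact ⟨r * c, by rw [map_smul, hc, smul_smul]⟩

lemma sub {M N : Matrix (∀ i, A i) (∀ i, A i) ℂ} (hM : HasUniformMarginals M)
    (hN : HasUniformMarginals N) : HasUniformMarginals (M - N) := fun k => by
  obtain ⟨c, hc⟩ := hM k
  obtain ⟨c', hc'⟩ := hN k
  exact ⟨c - c', by rw [map_sub, hc, hc', sub_smul]⟩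

lemma submatrix_piCongrRight {M : Matrix (∀ i, B i) (∀ i, B i) ℂ} (hM : HasUniformMarginals M)
    (e : ∀ i, A i ≃ B i) :
    HasUniformMarginals (M.submatrix (Equiv.piCongrRight e) (Equiv.piCongrRight e)) := fun k => by
  obtain ⟨c, hc⟩ := hM k
  exact ⟨c, by rw [marginal_submatrix_piCongrRight, hc, submatrix_smul, Pi.smul_apply,
    Pi.smul_apply, submatrix_one_equiv]⟩

end HasUniformMarginals

lemma marginal_one (k : ι) : marginal k (1 : Matrix (∀ i, A i) (∀ i, A i) ℂ) =
    ((∏ i ∈ univ.erase k, card (A i) : ℕ) : ℂ) • 1 := by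
  have card_fiber (p : A k) : #{x : ∀ i, A i | x k = p} = ∏ i ∈ univ.erase k, card (A i) := by
    simpa using Fintype.card_filter_piFinset_eq (fun i => (univ : Finset (A i))) k p
  ext p q
  have eq_update_iff (x : ∀ i, A i) : x = Function.update x k q ↔ x k = q := by
    rw [eq_comm, Function.update_eq_self_iff, eq_comm]
  rw [marginal_apply, ← sum_filter, Matrix.smul_apply, ← card_fiber p]
  rcases eq_or_ne p q with rfl | hpq
  · have entry_eq_one (x : ∀ i, A i) (hx : x ∈ ({x | x k = p} : Finset _)) :
        (1 : Matrix (∀ i, A i) (∀ i, A i) ℂ) x (Function.update x k p) = 1 := by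
      rw [← (eq_update_iff x).2 (mem_filter.1 hx).2, one_apply_eq]
    rw [sum_congr rfl entry_eq_one]
    simp
  · rw [one_apply_ne hpq, smul_zero]
    refine sum_eq_zero fun x hx => one_apply_ne fun h => hpq ?_
    rw [← (mem_filter.1 hx).2, (eq_update_iff x).1 h]

lemma hasUniformMarginals_one : HasUniformMarginals (1 : Matrix (∀ i, A i) (∀ i, A i) ℂ) :=
  fun k => ⟨_, marginal_one k⟩

end Marginal

section Grouping

variable {ι κ : Type*} {A : ι → Type*}

/-- The tensor factors indexed by `ι`, grouped into blocks along the fibres of `f`. -/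
@[simps]
def piFiberEquiv (f : ι → κ) : (∀ i, A i) ≃ ∀ k, ∀ i : {i // f i = k}, A i where
  toFun x _ i := x i
  invFun X i := X (f i) ⟨i, rfl⟩
  left_inv _ := rfl
  right_inv X := by
    ext k ⟨i, rfl⟩
    rfl

variable [DecidableEq ι] [DecidableEq κ]

lemma piFiberEquiv_update (f : ι → κ) (x : ∀ i, A i) (i : ι) (q : A i) :
    piFiberEquiv f (Function.update x i q) = Function.update (piFiberEquiv f x) (f i)
      (Function.update (piFiberEquiv f x (f i)) ⟨i, rfl⟩ q) := by
  refine Function.eq_update_iff.2 ⟨Function.eq_update_iff.2 ⟨?_, fun j hj => ?_⟩, fun k hk => ?_⟩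
  · simp
  · simp [Subtype.coe_ne_coe.2 hj]
  · ext ⟨j, rfl⟩
    have hj : j ≠ i := fun h => hk (h ▸ rfl)
    simp [hj]

variable [Fintype ι] [Fintype κ] [∀ i, Fintype (A i)] [∀ i, DecidableEq (A i)]

lemma marginal_submatrix_piFiberEquiv (f : ι → κ) (i : ι)
    (M : Matrix (∀ k, ∀ i : {i // f i = k}, A i) (∀ k, ∀ i : {i // f i = k}, A i) ℂ) :
    marginal i (M.submatrix (piFiberEquiv f) (piFiberEquiv f)) =
      marginal (A := fun j : {j // f j = f i} => A j) ⟨i, rfl⟩ (marginal (f i) M) := by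
  ext p q
  rw [marginal_apply, marginal_apply]
  have sum_fiber (y : ∀ j : {j // f j = f i}, A j) :
      (if y ⟨i, rfl⟩ = p then marginal (f i) M y (Function.update y ⟨i, rfl⟩ q) else 0) =
        ∑ X, if X (f i) = y then (if y ⟨i, rfl⟩ = p then
          M X (Function.update X (f i) (Function.update y ⟨i, rfl⟩ q)) else 0) else 0 := by
    split_ifs
    · rfl
    · simp
  rw [sum_congr rfl fun y _ => sum_fiber y, sum_comm]
  refine Fintype.sum_equiv (piFiberEquiv f) _ _ fun x => ?_
  rw [sum_ite_eq univ]
  simp [piFiberEquiv_update]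

lemma HasUniformMarginals.submatrix_piFiberEquiv {f : ι → κ}
    {M : Matrix (∀ k, ∀ i : {i // f i = k}, A i) (∀ k, ∀ i : {i // f i = k}, A i) ℂ}
    (hM : HasUniformMarginals M) :
    HasUniformMarginals (M.submatrix (piFiberEquiv f) (piFiberEquiv f)) := fun i => by
  obtain ⟨c, hc⟩ := hM (f i)
  obtain ⟨c', hc'⟩ :=
    (hasUniformMarginals_one (A := fun j : {j // f j = f i} => A j)).smul c ⟨i, rfl⟩
  exact ⟨c', by rw [marginal_submatrix_piFiberEquiv, hc, hc']⟩

end Grouping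

section Projection

variable {𝕜 Z B : Type*} [RCLike 𝕜] [Fintype Z] [Fintype B]

lemma isStarProjection_submatrix_equiv {P : Matrix Z Z 𝕜} (hP : IsStarProjection P) (e : B ≃ Z) :
    IsStarProjection (P.submatrix e e) where
  isIdempotentElem := by rw [IsIdempotentElem, submatrix_mul_equiv, hP.isIdempotentElem]
  isSelfAdjoint := IsHermitian.submatrix hP.isSelfAdjoint e

lemma isStarProjection_blockDiagonal [DecidableEq B] {Q : B → Matrix Z Z 𝕜}
    (hQ : ∀ b, IsStarProjection (Q b)) : IsStarProjection (blockDiagonal Q) where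
  isIdempotentElem := by
    rw [IsIdempotentElem, ← blockDiagonal_mul]
    exact congrArg _ (funext fun b => (hQ b).isIdempotentElem)
  isSelfAdjoint := by
    rw [isSelfAdjoint_iff, star_eq_conjTranspose, blockDiagonal_conjTranspose]
    exact congrArg _ (funext fun b => (hQ b).isSelfAdjoint)

lemma eigenvalues_eq_zero_or_one [DecidableEq Z] {P : Matrix Z Z 𝕜} (hP : P.IsHermitian)
    (hidem : IsIdempotentElem P) (i : Z) : hP.eigenvalues i = 0 ∨ hP.eigenvalues i = 1 :=
  hidem.spectrum_subset ℝ (hP.eigenvalues_mem_spectrum_real i)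

lemma card_eigenvalues_eq_one [DecidableEq Z] {P : Matrix Z Z 𝕜} (hP : P.IsHermitian)
    (hidem : IsIdempotentElem P) : (card {i // hP.eigenvalues i = 1} : 𝕜) = P.trace := by
  have eigenvalue_eq_ite (i : Z) :
      (hP.eigenvalues i : 𝕜) = if hP.eigenvalues i = 1 then 1 else 0 := by
    rcases eigenvalues_eq_zero_or_one hP hidem i with h | h <;> simp [h]
  rw [hP.trace_eq_sum_eigenvalues, sum_congr rfl fun i _ => eigenvalue_eq_ite i, sum_boole,
    Fintype.card_subtype]

lemma exists_mul_conjTranspose_eq_of_isStarProjection [DecidableEq B] {P : Matrix Z Z 𝕜}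
    (hP : IsStarProjection P) (htrace : P.trace = card B) :
    ∃ W : Matrix Z B 𝕜, Wᴴ * W = 1 ∧ W * Wᴴ = P := by
  classical
  have hherm : P.IsHermitian := hP.isSelfAdjoint
  have hcard : card B = card {i // hherm.eigenvalues i = 1} := by
    rw [← card_eigenvalues_eq_one hherm hP.isIdempotentElem] at htrace
    exact_mod_cast htrace.symm
  let f : B ≃ {i // hherm.eigenvalues i = 1} := Fintype.equivOfCardEq hcard
  let U : Matrix Z Z 𝕜 := hherm.eigenvectorUnitary
  have hU : Uᴴ * U = 1 := UnitaryGroup.star_mul_self hherm.eigenvectorUnitary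
  have spectral : P = U * diagonal (fun i => (hherm.eigenvalues i : 𝕜)) * Uᴴ :=
    hherm.spectral_theorem
  refine ⟨U.submatrix id fun b => f b, ?_, ?_⟩
  · rw [conjTranspose_submatrix, ← submatrix_mul _ _ _ _ _ Function.bijective_id, hU,
      submatrix_one (fun b => (f b : Z)) (Subtype.val_injective.comp f.injective)]
  · ext z z'
    conv_rhs => rw [spectral]
    rw [mul_apply, mul_apply]
    simp only [mul_diagonal, conjTranspose_apply, submatrix_apply, id_eq]
    rw [Fintype.sum_equiv f _ (fun i => U z i * star (U z' i)) fun _ => rfl,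
      ← sum_subtype {i | hherm.eigenvalues i = 1} (by simp) fun i => U z i * star (U z' i),
      sum_filter]
    refine sum_congr rfl fun i _ => ?_
    rcases eigenvalues_eq_zero_or_one hherm hP.isIdempotentElem i with h | h <;> simp [h]

lemma exists_natCast_eq_trace {P : Matrix Z Z 𝕜} (hP : IsStarProjection P) :
    ∃ r : ℕ, (r : 𝕜) = P.trace := by
  classical
  exact ⟨_, card_eigenvalues_eq_one hP.isSelfAdjoint hP.isIdempotentElem⟩

end Projection

section States

variable {ι : Type*} [Fintype ι] [DecidableEq ι] {A B : ι → Type*}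
  [∀ i, Fintype (A i)] [∀ i, DecidableEq (A i)] [∀ i, Fintype (B i)] [∀ i, DecidableEq (B i)]

variable (A) in
/-- There is a locally maximally entangled unit vector in the tensor product of the spaces
`ℂ ^ A i`; the density matrix of `ψ` is `vecMulVec ψ (star ψ)`. -/
def HasLME : Prop :=
  ∃ ψ : (∀ i, A i) → ℂ, ψ ⬝ᵥ star ψ = 1 ∧ HasUniformMarginals (vecMulVec ψ (star ψ))

variable (A) in
/-- The tensor product of the spaces `ℂ ^ A i` has a subspace of dimension `c` whose orthogonal
projection has scalar reduced matrices. -/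
def HasUniformProjection (c : ℕ) : Prop :=
  ∃ P : Matrix (∀ i, A i) (∀ i, A i) ℂ,
    IsStarProjection P ∧ P.trace = c ∧ HasUniformMarginals P

lemma HasLME.of_grouping {κ : Type*} [Fintype κ] [DecidableEq κ] {f : ι → κ}
    (h : HasLME fun k => ∀ i : {i // f i = k}, A i) : HasLME A := by
  obtain ⟨ψ, hψ, hunif⟩ := h
  exact ⟨ψ ∘ piFiberEquiv f,
    ((piFiberEquiv f).sum_comp fun X => ψ X * star ψ X).trans hψ, hunif.submatrix_piFiberEquiv⟩

lemma HasLME.of_card_eq (h : HasLME A) (hAB : ∀ i, card (A i) = card (B i)) : HasLME B := by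
  obtain ⟨ψ, hψ, hunif⟩ := h
  let e (i : ι) : B i ≃ A i := Fintype.equivOfCardEq (hAB i).symm
  exact ⟨ψ ∘ Equiv.piCongrRight e,
    ((Equiv.piCongrRight e).sum_comp fun X => ψ X * star ψ X).trans hψ,
    hunif.submatrix_piCongrRight e⟩

namespace HasUniformProjection

lemma of_card_eq {c : ℕ} (h : HasUniformProjection A c) (hAB : ∀ i, card (A i) = card (B i)) :
    HasUniformProjection B c := by
  obtain ⟨P, hP, htrace, hunif⟩ := h
  let E := Equiv.piCongrRight fun i => Fintype.equivOfCardEq (hAB i).symm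
  exact ⟨P.submatrix E E, isStarProjection_submatrix_equiv hP E,
    (E.sum_comp fun X => P X X).trans htrace, hunif.submatrix_piCongrRight _⟩

lemma card : HasUniformProjection A (∏ i, card (A i)) :=
  ⟨1, .one _, by simp [trace_one], hasUniformMarginals_one⟩

lemma complement {c c' : ℕ} (h : HasUniformProjection A c)
    (hc : c + c' = ∏ i, Fintype.card (A i)) : HasUniformProjection A c' := by
  obtain ⟨P, hP, htrace, hunif⟩ := h
  refine ⟨1 - P, hP.one_sub, ?_, hasUniformMarginals_one.sub hunif⟩
  rw [trace_sub, trace_one, htrace, Fintype.card_pi, ← hc]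
  simp

lemma le_card {c : ℕ} (h : HasUniformProjection A c) : c ≤ ∏ i, Fintype.card (A i) := by
  obtain ⟨P, hP, htrace, -⟩ := h
  obtain ⟨r, hr⟩ := exists_natCast_eq_trace hP.one_sub
  rw [trace_sub, trace_one, htrace, Fintype.card_pi, eq_sub_iff_add_eq] at hr
  have hsum : r + c = ∏ i, Fintype.card (A i) := by exact_mod_cast hr
  exact hsum ▸ Nat.le_add_left c r

end HasUniformProjection

end States

section Bipartition

variable {n : ℕ} {A : Fin (n + 1) → Type*}

/-- The matrix of the state `ψ` across the cut that separates the `p`-th tensor factor from all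
the others. -/
def bipartition (p : Fin (n + 1)) (ψ : (∀ i, A i) → ℂ) :
    Matrix (∀ j, A (p.succAbove j)) (A p) ℂ :=
  of fun z b => ψ (p.insertNth b z)

variable [∀ i, Fintype (A i)]

lemma trace_conjTranspose_bipartition_mul_self (p : Fin (n + 1)) (ψ : (∀ i, A i) → ℂ) :
    ((bipartition p ψ)ᴴ * bipartition p ψ).trace = ψ ⬝ᵥ star ψ := by
  rw [dotProduct, ← (Fin.insertNthEquiv A p).sum_comp, Fintype.sum_prod_type]
  simp [trace, mul_apply, bipartition, Fin.insertNthEquiv, mul_comm]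

variable [∀ i, DecidableEq (A i)]

lemma marginal_vecMulVec_star_self (p : Fin (n + 1)) (ψ : (∀ i, A i) → ℂ) :
    marginal p (vecMulVec ψ (star ψ)) = ((bipartition p ψ)ᴴ * bipartition p ψ)ᵀ := by
  ext b b'
  rw [marginal_apply, ← (Fin.insertNthEquiv A p).sum_comp, Fintype.sum_prod_type]
  simp [vecMulVec_apply, mul_apply, bipartition, Fin.insertNthEquiv, mul_comm]

lemma marginal_succAbove_vecMulVec_star_self (p : Fin (n + 1)) (j : Fin n)
    (ψ : (∀ i, A i) → ℂ) :
    marginal (p.succAbove j) (vecMulVec ψ (star ψ)) =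
      marginal j (bipartition p ψ * (bipartition p ψ)ᴴ) := by
  ext q q'
  rw [marginal_apply, marginal_apply, ← (Fin.insertNthEquiv A p).sum_comp,
    Fintype.sum_prod_type_right]
  simp [vecMulVec_apply, mul_apply, bipartition, Fin.insertNthEquiv]

lemma hasUniformMarginals_vecMulVec_star_self_iff (p : Fin (n + 1)) (ψ : (∀ i, A i) → ℂ) :
    HasUniformMarginals (vecMulVec ψ (star ψ)) ↔
      (∃ c : ℂ, (bipartition p ψ)ᴴ * bipartition p ψ = c • 1) ∧
        HasUniformMarginals (bipartition p ψ * (bipartition p ψ)ᴴ) := by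
  rw [HasUniformMarginals, Fin.forall_iff_succAbove p, marginal_vecMulVec_star_self]
  simp only [marginal_succAbove_vecMulVec_star_self]
  refine and_congr (exists_congr fun c => ?_) Iff.rfl
  rw [← transpose_inj, transpose_transpose, transpose_smul, transpose_one]

lemma HasLME.hasUniformProjection (h : HasLME A) (p : Fin (n + 1)) :
    HasUniformProjection (fun j => A (p.succAbove j)) (card (A p)) := by
  obtain ⟨ψ, hψ, hunif⟩ := h
  obtain ⟨⟨c, hc⟩, hunif⟩ := (hasUniformMarginals_vecMulVec_star_self_iff p ψ).1 hunif
  have htrace := trace_conjTranspose_bipartition_mul_self p ψ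
  set W := bipartition p ψ
  have hcard : card (A p) * c = 1 := by
    rw [← hψ, ← htrace, hc, trace_smul, trace_one, smul_eq_mul, mul_comm]
  refine ⟨(card (A p) : ℂ) • (W * Wᴴ), ⟨?_, ?_⟩, ?_, hunif.smul _⟩
  · rw [IsIdempotentElem, smul_mul_smul_comm, Matrix.mul_assoc, ← Matrix.mul_assoc Wᴴ, hc,
      smul_mul, Matrix.one_mul, Matrix.mul_smul, smul_smul, mul_assoc, hcard, mul_one]
  · rw [isSelfAdjoint_iff, star_smul, star_natCast, star_eq_conjTranspose,
      isHermitian_mul_conjTranspose_self]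
  · rw [trace_smul, trace_mul_comm, htrace, hψ, smul_eq_mul, mul_one]

lemma HasUniformProjection.hasLME (p : Fin (n + 1)) [Nonempty (A p)]
    (h : HasUniformProjection (fun j => A (p.succAbove j)) (Fintype.card (A p))) :
    HasLME A := by
  obtain ⟨P, hP, htrace, hunif⟩ := h
  obtain ⟨W, hWW, rfl⟩ := exists_mul_conjTranspose_eq_of_isStarProjection hP htrace
  let r : ℝ := (√(Fintype.card (A p)))⁻¹
  have hr : r * r * Fintype.card (A p) = 1 := by
    rw [← mul_inv, Real.mul_self_sqrt (Nat.cast_nonneg _), inv_mul_cancel₀ (by simp)]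
  let ψ : (∀ i, A i) → ℂ := fun x => r * W (p.removeNth x) (x p)
  have hψ : bipartition p ψ = r • W := by
    ext z b
    simp [bipartition, ψ]
  have hleft : (bipartition p ψ)ᴴ * bipartition p ψ = ((r * r : ℝ) : ℂ) • 1 := by
    simp [hψ, hWW, smul_smul, -Complex.ofReal_mul]
  have hright : bipartition p ψ * (bipartition p ψ)ᴴ = ((r * r : ℝ) : ℂ) • (W * Wᴴ) := by
    simp [hψ, smul_smul, -Complex.ofReal_mul]
  refine ⟨ψ, ?_, (hasUniformMarginals_vecMulVec_star_self_iff p ψ).2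
    ⟨⟨_, hleft⟩, hright ▸ hunif.smul _⟩⟩
  rw [← trace_conjTranspose_bipartition_mul_self p, hleft, trace_smul, trace_one, smul_eq_mul]
  exact_mod_cast hr

lemma hasLME_iff_hasUniformProjection (p : Fin (n + 1)) [Nonempty (A p)] :
    HasLME A ↔ HasUniformProjection (fun j => A (p.succAbove j)) (card (A p)) :=
  ⟨fun h => h.hasUniformProjection p, HasUniformProjection.hasLME p⟩

end Bipartition

/-! ### Diagonals of projections -/

section RotateRows

lemma sum_eq_sum_of_eq_off_pair {α M : Type*} [Fintype α] [AddCommMonoid M] {f g : α → M}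
    {i j : α} (hij : i ≠ j) (hpair : f i + f j = g i + g j)
    (hoff : ∀ x, x ≠ i → x ≠ j → f x = g x) : ∑ x, f x = ∑ x, g x := by
  classical
  rw [← sum_add_sum_compl {i, j} f, ← sum_add_sum_compl {i, j} g, sum_pair hij, sum_pair hij,
    hpair]
  congr 1
  refine sum_congr rfl fun x hx => ?_
  simp only [mem_compl, mem_insert, mem_singleton, not_or] at hx
  exact hoff x hx.1 hx.2

variable {α β : Type*} [DecidableEq α]

/-- The matrix `W` with the rows `i` and `j` rotated by the angle `t` in the plane they span. -/
def rotateRows (W : Matrix α β ℝ) (i j : α) (t : ℝ) : Matrix α β ℝ :=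
  (W.updateRow i (Real.cos t • W i + Real.sin t • W j)).updateRow j
    (Real.cos t • W j - Real.sin t • W i)

lemma rotateRows_left {W : Matrix α β ℝ} {i j : α} (hij : i ≠ j) (t : ℝ) :
    rotateRows W i j t i = Real.cos t • W i + Real.sin t • W j := by
  rw [rotateRows, updateRow_ne hij, updateRow_self]

lemma rotateRows_right (W : Matrix α β ℝ) (i j : α) (t : ℝ) :
    rotateRows W i j t j = Real.cos t • W j - Real.sin t • W i :=
  updateRow_self

lemma rotateRows_of_ne {W : Matrix α β ℝ} {i j x : α} (hi : x ≠ i) (hj : x ≠ j) (t : ℝ) :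
    rotateRows W i j t x = W x := by
  rw [rotateRows, updateRow_ne hj, updateRow_ne hi]

variable [Fintype α]

lemma transpose_rotateRows_mul_self (W : Matrix α β ℝ) {i j : α} (hij : i ≠ j) (t : ℝ) :
    (rotateRows W i j t)ᵀ * rotateRows W i j t = Wᵀ * W := by
  ext b b'
  simp only [mul_apply, transpose_apply]
  refine sum_eq_sum_of_eq_off_pair hij ?_ fun x hi hj => by rw [rotateRows_of_ne hi hj]
  rw [rotateRows_left hij, rotateRows_right]
  simp only [Pi.add_apply, Pi.sub_apply, Pi.smul_apply, smul_eq_mul]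
  linear_combination (W i b * W i b' + W j b * W j b') * Real.sin_sq_add_cos_sq t

end RotateRows

section Carpenter

variable {α β : Type*} [Fintype α] [Fintype β] [DecidableEq β]

lemma exists_transfer_row_norm {W : Matrix α β ℝ} (hW : Wᵀ * W = 1) {i j : α} (hij : i ≠ j)
    {v : ℝ} (hj : W j ⬝ᵥ W j ≤ v) (hi : v ≤ W i ⬝ᵥ W i) :
    ∃ V : Matrix α β ℝ, Vᵀ * V = 1 ∧ V i ⬝ᵥ V i = v ∧
      V j ⬝ᵥ V j = W i ⬝ᵥ W i + W j ⬝ᵥ W j - v ∧ ∀ x, x ≠ i → x ≠ j → V x = W x := by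
  classical
  let F (t : ℝ) : ℝ := rotateRows W i j t i ⬝ᵥ rotateRows W i j t i
  have F_eq (t : ℝ) : F t = Real.cos t ^ 2 * (W i ⬝ᵥ W i) + Real.sin t ^ 2 * (W j ⬝ᵥ W j) +
      2 * Real.cos t * Real.sin t * (W i ⬝ᵥ W j) := by
    simp only [F, rotateRows_left hij, add_dotProduct, dotProduct_add, smul_dotProduct,
      dotProduct_smul, smul_eq_mul, dotProduct_comm (W j) (W i)]
    ring
  have F_cont : Continuous F := by
    simp only [funext F_eq]
    fun_prop
  obtain ⟨t, -, ht⟩ : v ∈ F '' Set.Icc 0 (Real.pi / 2) :=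
    intermediate_value_Icc' Real.pi_div_two_pos.le F_cont.continuousOn (by simp [F_eq, hi, hj])
  refine ⟨rotateRows W i j t, by rw [transpose_rotateRows_mul_self W hij, hW], ht, ?_,
    fun x hxi hxj => rotateRows_of_ne hxi hxj t⟩
  rw [F_eq] at ht
  simp only [rotateRows_right, sub_dotProduct, dotProduct_sub, smul_dotProduct,
    dotProduct_smul, smul_eq_mul, dotProduct_comm (W j) (W i)]
  linear_combination (W i ⬝ᵥ W i + W j ⬝ᵥ W j) * Real.sin_sq_add_cos_sq t - ht

lemma exists_isometry_of_forall_eq_zero_or_one {w : α → ℝ} (hw : ∀ x, w x = 0 ∨ w x = 1)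
    (hsum : ∑ x, w x = card β) :
    ∃ W : Matrix α β ℝ, Wᵀ * W = 1 ∧ ∀ x, W x ⬝ᵥ W x = w x := by
  classical
  have w_eq_ite (x : α) : w x = if w x = 1 then 1 else 0 := by rcases hw x with h | h <;> simp [h]
  have hcard : card β = card {x // w x = 1} := by
    rw [sum_congr rfl fun x _ => w_eq_ite x, sum_boole, ← Fintype.card_subtype] at hsum
    exact_mod_cast hsum.symm
  let f : β ≃ {x // w x = 1} := Fintype.equivOfCardEq hcard
  refine ⟨(1 : Matrix α α ℝ).submatrix id fun b => f b, ?_, fun x => ?_⟩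
  · rw [transpose_submatrix, ← submatrix_mul _ _ _ _ _ Function.bijective_id, transpose_one,
      Matrix.one_mul, submatrix_one (fun b => (f b : α)) (Subtype.val_injective.comp f.injective)]
  · rw [dotProduct, w_eq_ite x,
      Fintype.sum_equiv f _ (fun y => if x = y then (1 : ℝ) else 0) fun b => by simp [one_apply],
      ← sum_subtype {y | w y = 1} (by simp) fun y => if x = y then (1 : ℝ) else 0]
    simp

lemma exists_ne_fractional {w : α → ℝ} (hw : ∀ x, w x ∈ Set.Icc 0 1) {r : ℤ}
    (hsum : ∑ x, w x = r) {i : α} (hi : w i ∈ Set.Ioo 0 1) : ∃ j, j ≠ i ∧ w j ∈ Set.Ioo 0 1 := by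
  classical
  by_contra! h
  have w_int (x : α) (hx : x ∈ univ.erase i) : w x = ((if w x = 0 then 0 else 1 : ℤ) : ℝ) := by
    have := h x (ne_of_mem_erase hx)
    split_ifs with h0
    · simp [h0]
    · by_contra h1
      exact this ⟨(hw x).1.lt_of_ne' h0, (hw x).2.lt_of_ne (by simpa using h1)⟩
  rw [← add_sum_erase _ _ (mem_univ i), sum_congr rfl w_int, ← Int.cast_sum,
    ← eq_sub_iff_add_eq, ← Int.cast_sub] at hsum
  rw [hsum] at hi
  have hpos := hi.1
  have hlt := hi.2
  norm_cast at hpos hlt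
  omega

lemma exists_spread {w : α → ℝ} (hw : ∀ x, w x ∈ Set.Icc 0 1) {i j : α} (hij : i ≠ j)
    (hi : w i ∈ Set.Ioo 0 1) (hj : w j ∈ Set.Ioo 0 1) :
    ∃ w' : α → ℝ, (∀ x, w' x ∈ Set.Icc 0 1) ∧ w' i + w' j = w i + w j ∧ w i ∈ Set.Icc (w' j) (w' i)
      ∧ (∀ x, x ≠ i → x ≠ j → w' x = w x) ∧
      #{x | w' x ∈ Set.Ioo 0 1} < #{x | w x ∈ Set.Ioo 0 1} := by
  classical
  obtain ⟨a, b, hab, hb0, hbi, hia, ha1, hextreme⟩ : ∃ a b : ℝ, a + b = w i + w j ∧ 0 ≤ b ∧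
      b ≤ w i ∧ w i ≤ a ∧ a ≤ 1 ∧ (b = 0 ∨ a = 1) := by
    rcases le_total (w i + w j) 1 with h | h
    · exact ⟨w i + w j, 0, by ring, le_rfl, hi.1.le, by linarith [hj.1], h, .inl rfl⟩
    · exact ⟨1, w i + w j - 1, by ring, by linarith, by linarith [hj.2], hi.2.le, le_rfl, .inr rfl⟩
  let w' : α → ℝ := Function.update (Function.update w i a) j b
  have w'_i : w' i = a := by simp [w', hij]
  have w'_j : w' j = b := by simp [w']
  have w'_off (x : α) (hxi : x ≠ i) (hxj : x ≠ j) : w' x = w x := by simp [w', hxi, hxj]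
  refine ⟨w', fun x => ?_, by rw [w'_i, w'_j, hab], by rw [w'_i, w'_j]; exact ⟨hbi, hia⟩, w'_off,
    card_lt_card ((ssubset_iff_of_subset fun x => ?_).2 ?_)⟩
  · rcases eq_or_ne x i with rfl | hxi
    · rw [w'_i]
      exact ⟨hb0.trans (hbi.trans hia), ha1⟩
    rcases eq_or_ne x j with rfl | hxj
    · rw [w'_j]
      exact ⟨hb0, hbi.trans (hia.trans ha1)⟩
    · rw [w'_off x hxi hxj]
      exact hw x
  · rcases eq_or_ne x i with rfl | hxi
    · simp [hi.1, hi.2]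
    rcases eq_or_ne x j with rfl | hxj
    · simp [hj.1, hj.2]
    · simp [w'_off x hxi hxj]
  · rcases hextreme with rfl | rfl
    · exact ⟨j, by simpa using hj, by simp [w'_j]⟩
    · exact ⟨i, by simpa using hi, by simp [w'_i]⟩

theorem exists_isometry_row_norm_eq {w : α → ℝ} (hw : ∀ x, w x ∈ Set.Icc 0 1)
    (hsum : ∑ x, w x = card β) : ∃ W : Matrix α β ℝ, Wᵀ * W = 1 ∧ ∀ x, W x ⬝ᵥ W x = w x := by
  induction hN : #{x | w x ∈ Set.Ioo 0 1} using Nat.strong_induction_on generalizing w with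
  | _ N ih =>
    by_cases hfrac : ∃ i, w i ∈ Set.Ioo 0 1
    · obtain ⟨i, hi⟩ := hfrac
      obtain ⟨j, hji, hj⟩ := exists_ne_fractional (r := card β) hw (by exact_mod_cast hsum) hi
      obtain ⟨w', hw', hpair, hbetween, hoff, hlt⟩ := exists_spread hw hji.symm hi hj
      have hsum' : ∑ x, w' x = card β := by
        rw [← hsum, sum_eq_sum_of_eq_off_pair hji.symm hpair hoff]
      obtain ⟨W, hW, hnorm⟩ := ih _ (hN ▸ hlt) hw' hsum' rfl
      obtain ⟨V, hV, hVi, hVj, hVoff⟩ := exists_transfer_row_norm hW hji.symm (v := w i)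
        (by rw [hnorm]; exact hbetween.1) (by rw [hnorm]; exact hbetween.2)
      refine ⟨V, hV, fun x => ?_⟩
      rcases eq_or_ne x i with rfl | hxi
      · exact hVi
      rcases eq_or_ne x j with rfl | hxj
      · rw [hVj, hnorm, hnorm, hpair, add_sub_cancel_left]
      · rw [hVoff x hxi hxj, hnorm, hoff x hxi hxj]
    · refine exists_isometry_of_forall_eq_zero_or_one (fun x => ?_) hsum
      by_contra! h
      exact hfrac ⟨x, (hw x).1.lt_of_ne' h.1, (hw x).2.lt_of_ne h.2⟩

theorem exists_isStarProjection_diag_eq {w : α → ℝ} (hw : ∀ x, w x ∈ Set.Icc 0 1) {r : ℤ}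
    (hsum : ∑ x, w x = r) : ∃ P : Matrix α α ℂ, IsStarProjection P ∧ ∀ x, P x x = w x := by
  classical
  have hr : 0 ≤ r := by
    have := sum_nonneg fun x (_ : x ∈ univ) => (hw x).1
    exact_mod_cast hsum ▸ this
  lift r to ℕ using hr
  obtain ⟨W, hW, hnorm⟩ := exists_isometry_row_norm_eq (β := Fin r) hw (by simpa using hsum)
  have hidem : IsIdempotentElem (W * Wᵀ) := by
    rw [IsIdempotentElem, Matrix.mul_assoc, ← Matrix.mul_assoc Wᵀ, hW, Matrix.one_mul]
  refine ⟨Complex.ofRealHom.mapMatrix (W * Wᵀ), ⟨hidem.map _, ?_⟩,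
    fun x => congrArg Complex.ofReal (hnorm x)⟩
  ext x y
  simp [mul_apply, mul_comm]

end Carpenter

/-! ### Three comparable factors -/

section Sheared

variable {A : Fin 2 → Type*} {G : Type*} [AddCommGroup G]

/-- The coordinates `(i, j) ↦ (i, j - g i)` on a bipartite index set whose second factor is
identified with the group `G`. -/
def shearEquiv (g : A 0 → G) (e : A 1 ≃ G) : (∀ i, A i) ≃ A 0 × G :=
  (piFinTwoEquiv A).trans (Equiv.prodShear (.refl _) fun i => e.trans (Equiv.subRight (g i)))

/-- The direct sum of the operators `Q t` over the diagonals `j - g i = t` of the grid. -/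
def shearedBlockDiagonal [DecidableEq G] (g : A 0 → G) (e : A 1 ≃ G)
    (Q : G → Matrix (A 0) (A 0) ℂ) : Matrix (∀ i, A i) (∀ i, A i) ℂ :=
  (blockDiagonal Q).submatrix (shearEquiv g e) (shearEquiv g e)

lemma shearedBlockDiagonal_apply [DecidableEq G] (g : A 0 → G) (e : A 1 ≃ G)
    (Q : G → Matrix (A 0) (A 0) ℂ) (x y : ∀ i, A i) : shearedBlockDiagonal g e Q x y =
      if e (x 1) - g (x 0) = e (y 1) - g (y 0) then Q (e (x 1) - g (x 0)) (x 0) (y 0) else 0 :=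
  rfl

variable [∀ i, Fintype (A i)] [∀ i, DecidableEq (A i)]

lemma marginal_zero_shearedBlockDiagonal [DecidableEq G] [Fintype G] {g : A 0 → G}
    (hg : Function.Injective g) (e : A 1 ≃ G) (Q : G → Matrix (A 0) (A 0) ℂ) :
    marginal 0 (shearedBlockDiagonal g e Q) = diagonal fun i => ∑ t, Q t i i := by
  ext p q
  have reindexed : (∑ x : ∀ i, A i, if x 0 = p then shearedBlockDiagonal g e Q x
      (Function.update x 0 q) else 0) = if g p = g q then ∑ j, Q (e j - g p) p q else 0 := by
    rw [← (piFinTwoEquiv A).symm.sum_comp, Fintype.sum_prod_type,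
      Finset.sum_eq_single p _ (by simp)]
    · simp [shearedBlockDiagonal_apply]
    · intro i _ hi
      simp [hi]
  rw [marginal_apply, reindexed]
  simp only [hg.eq_iff]
  rcases eq_or_ne p q with rfl | hpq
  · rw [if_pos rfl, diagonal_apply_eq]
    exact (e.trans (Equiv.subRight (g p))).sum_comp fun t => Q t p p
  · rw [if_neg hpq, diagonal_apply_ne _ hpq]

lemma marginal_one_shearedBlockDiagonal [DecidableEq G] (g : A 0 → G) (e : A 1 ≃ G)
    (Q : G → Matrix (A 0) (A 0) ℂ) :
    marginal 1 (shearedBlockDiagonal g e Q) =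
      diagonal fun j => ∑ i, Q (e j - g i) i i := by
  ext p q
  simp only [marginal_apply, shearedBlockDiagonal_apply]
  rw [← (piFinTwoEquiv A).symm.sum_comp, Fintype.sum_prod_type_right,
    Finset.sum_eq_single p _ (by simp)]
  · simp [diagonal_apply]
  · intro i _ hi
    simp [hi]

theorem hasUniformProjection_of_weights [Fintype G] {g : A 0 → G} (hg : Function.Injective g)
    (e : A 1 ≃ G) {w : A 0 → G → ℝ} (hw : ∀ i t, w i t ∈ Set.Icc 0 1)
    (hint : ∀ t, ∃ r : ℤ, ∑ i, w i t = r) {r s : ℝ} (hrow : ∀ i, ∑ t, w i t = r)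
    (hcol : ∀ j, ∑ i, w i (j - g i) = s) {c : ℕ} (hc : card (A 0) * r = c) :
    HasUniformProjection A c := by
  classical
  choose m hm using hint
  choose Q hQ hdiag using fun t => exists_isStarProjection_diag_eq (fun i => hw i t) (hm t)
  have hmarg0 : marginal 0 (shearedBlockDiagonal g e Q) = (r : ℂ) • 1 := by
    rw [marginal_zero_shearedBlockDiagonal hg, smul_one_eq_diagonal]
    simp only [hdiag, ← Complex.ofReal_sum, hrow]
  have hmarg1 : marginal 1 (shearedBlockDiagonal g e Q) = (s : ℂ) • 1 := by
    rw [marginal_one_shearedBlockDiagonal, smul_one_eq_diagonal]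
    simp only [hdiag, ← Complex.ofReal_sum, hcol]
  refine ⟨shearedBlockDiagonal g e Q,
    isStarProjection_submatrix_equiv (isStarProjection_blockDiagonal hQ) _, ?_,
    Fin.forall_fin_two.2 ⟨⟨r, hmarg0⟩, ⟨s, hmarg1⟩⟩⟩
  rw [← trace_marginal 0, hmarg0, trace_smul, trace_one, smul_eq_mul, mul_comm]
  exact_mod_cast congrArg Complex.ofReal hc

end Sheared

section CenteredResidue

variable (b c : ℕ) [NeZero b]

/-- The residue of `t * c` modulo `b`, shifted to have mean zero over all residue classes `t`. -/
def centeredResidue (t : ZMod b) : ℝ :=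
  (t * c : ZMod b).val - (∑ u : ZMod b, ((u * c : ZMod b).val : ℝ)) / b

lemma sum_centeredResidue : ∑ t, centeredResidue b c t = 0 := by
  have hb : (b : ℝ) ≠ 0 := NeZero.ne _
  simp only [centeredResidue, sum_sub_distrib, sum_const, card_univ, ZMod.card, nsmul_eq_mul]
  rw [mul_div_cancel₀ _ hb, sub_self]

lemma val_mul_le_two_mul_mean (t : ZMod b) :
    ((t * c : ZMod b).val : ℝ) ≤ 2 * ((∑ u : ZMod b, ((u * c : ZMod b).val : ℝ)) / b) := by
  have hb : (0 : ℝ) < b := Nat.cast_pos.2 (NeZero.pos b)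
  have subadditive (u : ZMod b) : ((t * c : ZMod b).val : ℝ) ≤
      ((t - u) * c : ZMod b).val + (u * c : ZMod b).val := by
    have := ZMod.val_add_le ((t - u) * (c : ZMod b)) (u * c)
    rw [← add_mul, sub_add_cancel] at this
    exact_mod_cast this
  have averaged := sum_le_sum fun u (_ : u ∈ univ) => subadditive u
  rw [sum_add_distrib, sum_const, card_univ, ZMod.card, nsmul_eq_mul,
    Fintype.sum_equiv (Equiv.subLeft t) (fun u => (((t - u) * c : ZMod b).val : ℝ))
      (fun u => ((u * c : ZMod b).val : ℝ)) fun _ => rfl] at averaged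
  rw [← mul_div_assoc, le_div_iff₀ hb]
  linarith

lemma two_mul_mean_val_mul_le :
    2 * ((∑ u : ZMod b, ((u * c : ZMod b).val : ℝ)) / b) ≤ b := by
  have hb : (0 : ℝ) < b := Nat.cast_pos.2 (NeZero.pos b)
  have val_add_val_neg_le (u : ZMod b) :
      ((u * c : ZMod b).val : ℝ) + (-u * c : ZMod b).val ≤ b := by
    rw [neg_mul, ZMod.neg_val]
    have := (ZMod.val_lt (u * (c : ZMod b))).le
    split_ifs with h
    · simp [h]
    · exact_mod_cast (Nat.add_sub_cancel' this).le
  have averaged := sum_le_sum fun u (_ : u ∈ univ) => val_add_val_neg_le u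
  have reflected : ∑ u : ZMod b, ((-u * c : ZMod b).val : ℝ) =
      ∑ u : ZMod b, ((u * c : ZMod b).val : ℝ) :=
    Equiv.sum_comp (Equiv.neg (ZMod b)) fun u => ((u * c : ZMod b).val : ℝ)
  rw [sum_add_distrib, reflected, sum_const, card_univ, ZMod.card, nsmul_eq_mul] at averaged
  rw [← mul_div_assoc, div_le_iff₀ hb]
  linarith

lemma abs_centeredResidue_le (t : ZMod b) : |centeredResidue b c t| ≤ b / 2 := by
  have hle := val_mul_le_two_mul_mean b c t
  have hmean := two_mul_mean_val_mul_le b c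
  rw [centeredResidue, abs_le]
  constructor <;> linarith [Nat.cast_nonneg (α := ℝ) (t * c : ZMod b).val]

variable {b c} in
lemma centeredResidue_add_one_sub_le (hbc : b ≤ c) (t : ZMod b) :
    centeredResidue b c (t + 1) - centeredResidue b c t ≤ c - b := by
  have hval : ((t + 1) * c : ZMod b).val ≤ (t * c : ZMod b).val + c % b := by
    have := ZMod.val_add_le (t * (c : ZMod b)) c
    rwa [ZMod.val_natCast, ← add_one_mul] at this
  have hmod : b + c % b ≤ c := by
    rw [Nat.mod_eq_sub_mod hbc]
    have := Nat.mod_le (c - b) b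
    omega
  have hstep : (((t + 1) * c : ZMod b).val : ℝ) + b ≤ (t * c : ZMod b).val + c := by
    exact_mod_cast (by omega : ((t + 1) * c : ZMod b).val + b ≤ (t * c : ZMod b).val + c)
  rw [centeredResidue, centeredResidue]
  linarith

lemma exists_int_eq_add_centeredResidue_sub (t : ZMod b) :
    ∃ r : ℤ, (c + (centeredResidue b c t - centeredResidue b c (t + 1))) / b = r := by
  have hb : (b : ℝ) ≠ 0 := NeZero.ne _
  have hdvd : (b : ℤ) ∣ c + ((t * c : ZMod b).val - ((t + 1) * c : ZMod b).val) := by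
    rw [← ZMod.intCast_zmod_eq_zero_iff_dvd]
    push_cast
    rw [ZMod.natCast_zmod_val, ZMod.natCast_zmod_val]
    ring
  obtain ⟨r, hr⟩ := hdvd
  refine ⟨r, ?_⟩
  rw [div_eq_iff hb, centeredResidue, centeredResidue, sub_sub_sub_cancel_right]
  rw [mul_comm (b : ℤ)] at hr
  exact_mod_cast hr

end CenteredResidue

section TruncatedDifference

variable {G : Type*} [AddCommGroupWithOne G] {n : ℕ}

/-- The differences `F t - F (t + 1)`, with the first term dropped for the last index `i` and the
second term dropped for `i = 0`, so that the sums over `i` along `i + t = j` telescope to zero. -/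
def truncatedDifference (F : G → ℝ) (i : Fin (n + 1)) (t : G) : ℝ :=
  (if i = Fin.last n then 0 else F t) - if i = 0 then 0 else F (t + 1)

lemma sum_truncatedDifference_left (F : G → ℝ) (t : G) :
    ∑ i, truncatedDifference (n := n) F i t = n * (F t - F (t + 1)) := by
  simp only [truncatedDifference, sum_sub_distrib]
  rw [Fin.sum_univ_castSucc, Fin.sum_univ_succ fun i => if i = 0 then 0 else F (t + 1)]
  simp [mul_sub]

lemma sum_truncatedDifference_right [Fintype G] {F : G → ℝ} (hF : ∑ t, F t = 0)
    (i : Fin (n + 1)) : ∑ t, truncatedDifference F i t = 0 := by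
  have hshift : ∑ t, F (t + 1) = 0 := (Equiv.sum_comp (Equiv.addRight 1) F).trans hF
  simp [truncatedDifference, sum_sub_distrib, hF, hshift]

lemma sum_truncatedDifference_diagonal (F : G → ℝ) (j : G) :
    ∑ i : Fin (n + 1), truncatedDifference F i (j - (i : ℕ)) = 0 := by
  simp only [truncatedDifference, sum_sub_distrib]
  rw [Fin.sum_univ_castSucc,
    Fin.sum_univ_succ fun i : Fin (n + 1) => if i = 0 then 0 else F (j - (i : ℕ) + 1)]
  simp [sub_add_eq_add_sub]

lemma truncatedDifference_le {F : G → ℝ} {B : ℝ} (hF : ∀ t, |F t| ≤ B) (hn : 1 ≤ n)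
    (i : Fin (n + 1)) (t : G) : truncatedDifference F i t ≤ n * B := by
  have h₁ := abs_le.1 (hF t)
  have h₂ := abs_le.1 (hF (t + 1))
  have hB : B ≤ n * B := le_mul_of_one_le_left ((abs_nonneg _).trans (hF t)) (by exact_mod_cast hn)
  unfold truncatedDifference
  split_ifs with hlast hzero hzero
  · linarith
  · linarith
  · linarith
  · have hval : (i : ℕ) ≠ n := fun h => hlast (Fin.ext h)
    have hval' : (i : ℕ) ≠ 0 := fun h => hzero (Fin.ext h)
    have two_le : (2 : ℝ) ≤ n := by exact_mod_cast (by omega : 2 ≤ n)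
    nlinarith

lemma neg_le_truncatedDifference {F : G → ℝ} {B C : ℝ} (hF : ∀ t, |F t| ≤ B)
    (hBC : B ≤ C) (hstep : ∀ t, F (t + 1) - F t ≤ C) (i : Fin (n + 1)) (t : G) :
    -C ≤ truncatedDifference F i t := by
  have h₁ := abs_le.1 (hF t)
  have h₂ := abs_le.1 (hF (t + 1))
  have h₃ := hstep t
  unfold truncatedDifference
  split_ifs <;> linarith

end TruncatedDifference

section Weights

variable {n b c : ℕ} [NeZero b]

variable (n b c) in
/-- The diagonal entry, at position `i`, of the `t`-th block of a projection of trace `c` on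
`ℂ ^ (n + 1) ⊗ ℂ ^ b`: the uniform density, corrected by a term that makes the trace of every block
an integer and does not change the marginals. -/
def weight (i : Fin (n + 1)) (t : ZMod b) : ℝ :=
  c / ((n + 1) * b) + truncatedDifference (centeredResidue b c) i t / (b * n)

lemma weight_mem_Icc (hn : 1 ≤ n) (hbc : b ≤ c) (hc : 2 * c ≤ (n + 1) * b) (i : Fin (n + 1))
    (t : ZMod b) : weight n b c i t ∈ Set.Icc 0 1 := by
  have : (1 : ℝ) ≤ n := by exact_mod_cast hn
  have hb' : (0 : ℝ) < b := Nat.cast_pos.2 (NeZero.pos b)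
  have hbc' : (b : ℝ) ≤ c := by exact_mod_cast hbc
  have hc' : 2 * (c : ℝ) ≤ (n + 1) * b := by exact_mod_cast hc
  have hlower : -(n * c / (n + 1) : ℝ) ≤ truncatedDifference (centeredResidue b c) i t := by
    refine neg_le_truncatedDifference (abs_centeredResidue_le b c) ?_
      (fun u => (centeredResidue_add_one_sub_le hbc u).trans ?_) i t
    · rw [div_le_div_iff₀ two_pos (by positivity)]
      nlinarith
    · rw [le_div_iff₀ (by positivity)]
      nlinarith
  have hupper := truncatedDifference_le (abs_centeredResidue_le b c) hn i t
  constructor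
  · calc (0 : ℝ) = c / ((n + 1) * b) + -(n * c / (n + 1)) / (b * n) := by field_simp; ring
      _ ≤ weight n b c i t := by unfold weight; gcongr
  · calc weight n b c i t ≤ c / ((n + 1) * b) + n * (b / 2) / (b * n) := by unfold weight; gcongr
      _ = c / ((n + 1) * b) + 1 / 2 := by field_simp
      _ ≤ 1 / 2 + 1 / 2 := by
        rw [add_le_add_iff_right, div_le_div_iff₀ (by positivity) two_pos]
        linarith
      _ = 1 := add_halves 1

lemma exists_int_eq_sum_weight (hn : n ≠ 0) (t : ZMod b) :
    ∃ r : ℤ, ∑ i, weight n b c i t = r := by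
  obtain ⟨r, hr⟩ := exists_int_eq_add_centeredResidue_sub b c t
  refine ⟨r, ?_⟩
  simp only [← hr, weight, sum_add_distrib, ← sum_div, sum_truncatedDifference_left, sum_const,
    card_univ, Fintype.card_fin, nsmul_eq_mul]
  have hb : (b : ℝ) ≠ 0 := NeZero.ne _
  push_cast
  field_simp

lemma sum_weight_right (i : Fin (n + 1)) : ∑ t, weight n b c i t = c / (n + 1) := by
  have hb : (b : ℝ) ≠ 0 := NeZero.ne _
  simp only [weight, sum_add_distrib, ← sum_div, sum_const, card_univ, ZMod.card, nsmul_eq_mul,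
    sum_truncatedDifference_right (sum_centeredResidue b c)]
  field_simp
  simp

lemma sum_weight_diagonal (j : ZMod b) :
    ∑ i : Fin (n + 1), weight n b c i (j - (i : ℕ)) = c / b := by
  have hb : (b : ℝ) ≠ 0 := NeZero.ne _
  simp only [weight, sum_add_distrib, ← sum_div, sum_truncatedDifference_diagonal, sum_const,
    card_univ, Fintype.card_fin, nsmul_eq_mul]
  push_cast
  field_simp
  ring

end Weights

theorem hasLME_fin_three {a b c : ℕ} (ha : 2 ≤ a) (hab : a ≤ b) (hbc : b ≤ c)
    (hc : 2 * c ≤ a * b) : HasLME fun i => Fin (![a, b, c] i) := by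
  obtain ⟨n, rfl⟩ : ∃ n, a = n + 1 := ⟨a - 1, by omega⟩
  have : NeZero b := ⟨by omega⟩
  have hinj : Function.Injective fun i : Fin (n + 1) => ((i : ℕ) : ZMod b) := fun i j hij => by
    rw [ZMod.natCast_eq_natCast_iff', Nat.mod_eq_of_lt (by omega),
      Nat.mod_eq_of_lt (by omega)] at hij
    exact Fin.ext hij
  have htrace : (card (Fin (n + 1)) : ℝ) * (c / (n + 1)) = c := by
    rw [Fintype.card_fin]
    push_cast
    field_simp
  have : Nonempty (Fin (![n + 1, b, c] 2)) := ⟨⟨0, by simp; omega⟩⟩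
  rw [hasLME_iff_hasUniformProjection 2, Fintype.card_fin]
  exact hasUniformProjection_of_weights
    (A := fun j : Fin 2 => Fin (![n + 1, b, c] (Fin.succAbove 2 j))) hinj
    (ZMod.finEquiv b).toEquiv (weight_mem_Icc (by omega) hbc hc)
    (exists_int_eq_sum_weight (by omega)) sum_weight_right sum_weight_diagonal htrace

/-! ### Arithmetic of `R` -/

section GcdSum

lemma sum_biUnion_le {ι α : Type*} [DecidableEq α] (s : Finset ι) (t : ι → Finset α) {f : α → ℤ}
    (hf : ∀ x, 0 ≤ f x) : ∑ x ∈ s.biUnion t, f x ≤ ∑ i ∈ s, ∑ x ∈ t i, f x := by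
  classical
  induction s using Finset.induction_on with
  | empty => simp
  | insert i s hi ih =>
    have hinter : 0 ≤ ∑ x ∈ t i ∩ s.biUnion t, f x := sum_nonneg fun x _ => hf x
    have hunion := sum_union_inter (s₁ := t i) (s₂ := s.biUnion t) (f := f)
    rw [biUnion_insert, sum_insert hi]
    linarith

variable {n : ℕ} {k : Fin n → ℕ}

lemma sum_totient_divisors {m : ℕ} : ∑ t ∈ m.divisors, (Nat.totient t : ℤ) = m := by
  exact_mod_cast m.sum_totient

lemma Nfun_eq_sum_totient (hk : ∀ i, 0 < k i) :
    Nfun k = ∑ m ∈ univ.biUnion fun i => (k i).divisors, (Nat.totient m : ℤ) := by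
  have divisors_gcd (S : Finset (Fin n)) (hS : S.Nonempty) :
      S.inf' hS (fun i => (k i).divisors) = (S.gcd k).divisors := by
    have gcd_ne_zero : S.gcd k ≠ 0 := fun h =>
      (hk _).ne' (Finset.gcd_eq_zero_iff.1 h _ hS.choose_spec)
    ext m
    simp [mem_inf', Finset.dvd_gcd_iff, gcd_ne_zero, (hk _).ne']
  rw [inclusion_exclusion_sum_biUnion, Nfun, ← sum_coe_sort]
  simp [divisors_gcd, sum_totient_divisors]

lemma Nfun_le_of_forall_exists_dvd {m : ℕ} {k' : Fin m → ℕ} (hk : ∀ i, 0 < k i)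
    (hk' : ∀ j, 0 < k' j) (h : ∀ i, ∃ j, k i ∣ k' j) : Nfun k ≤ Nfun k' := by
  rw [Nfun_eq_sum_totient hk, Nfun_eq_sum_totient hk']
  refine sum_le_sum_of_subset_of_nonneg (biUnion_subset.2 fun i _ => ?_) fun _ _ _ => by positivity
  obtain ⟨j, hj⟩ := h i
  exact (Nat.divisors_subset_of_dvd (hk' j).ne' hj).trans
    (subset_biUnion_of_mem (fun j => (k' j).divisors) (mem_univ j))

lemma le_Nfun (hk : ∀ i, 0 < k i) (i : Fin n) : (k i : ℤ) ≤ Nfun k := by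
  rw [Nfun_eq_sum_totient hk, ← sum_totient_divisors]
  exact sum_le_sum_of_subset_of_nonneg
    (subset_biUnion_of_mem (fun i => (k i).divisors) (mem_univ i)) fun _ _ _ => by positivity

lemma Nfun_eq_of_forall_dvd (hk : ∀ i, 0 < k i) {p : Fin n} (hp : ∀ i, k i ∣ k p) :
    Nfun k = k p := by
  have union_eq : (univ.biUnion fun i => (k i).divisors) = (k p).divisors :=
    (biUnion_subset.2 fun i _ => Nat.divisors_subset_of_dvd (hk p).ne' (hp i)).antisymm
      (subset_biUnion_of_mem (fun i => (k i).divisors) (mem_univ p))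
  rw [Nfun_eq_sum_totient hk, union_eq, sum_totient_divisors]

lemma Nfun_le_one_add_sum (hk : ∀ i, 0 < k i) : Nfun k ≤ 1 + ∑ i, ((k i : ℤ) - 1) := by
  have sum_erase_one {m : ℕ} (hm : 0 < m) :
      ∑ t ∈ m.divisors.erase 1, (Nat.totient t : ℤ) = m - 1 := by
    rw [← sum_totient_divisors, ← add_sum_erase _ _ (Nat.one_mem_divisors.2 hm.ne')]
    simp
  calc Nfun k = ∑ m ∈ univ.biUnion fun i => (k i).divisors, (Nat.totient m : ℤ) :=
        Nfun_eq_sum_totient hk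
    _ ≤ ∑ m ∈ insert 1 (univ.biUnion fun i => (k i).divisors.erase 1), (Nat.totient m : ℤ) := by
        refine sum_le_sum_of_subset_of_nonneg (fun m hm => ?_) fun _ _ _ => by positivity
        simp_all [or_iff_not_imp_left]
    _ = 1 + ∑ m ∈ univ.biUnion fun i => (k i).divisors.erase 1, (Nat.totient m : ℤ) := by
        rw [sum_insert (by simp)]
        simp
    _ ≤ 1 + ∑ i, ((k i : ℤ) - 1) := by
        simp only [← sum_erase_one (hk _)]
        gcongr
        exact sum_biUnion_le _ _ fun _ => by positivity

lemma Nfun_eq_removeNth {k : Fin (n + 1) → ℕ} (hk : ∀ i, 0 < k i) (p : Fin (n + 1)) :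
    Nfun k = k p + Nfun (p.removeNth k) - Nfun fun j => (k p).gcd (p.removeNth k j) := by
  have split_union : (univ.biUnion fun i => (k i).divisors) =
      (k p).divisors ∪ univ.biUnion fun j => (p.removeNth k j).divisors := by
    ext m
    simp [Fin.exists_iff_succAbove p, Fin.removeNth_apply]
  have inter_eq : ((k p).divisors ∩ univ.biUnion fun j => (p.removeNth k j).divisors) =
      univ.biUnion fun j => ((k p).gcd (p.removeNth k j)).divisors := by
    simp_rw [inter_biUnion]
    congr! 2 with j
    ext m
    simp [Nat.dvd_gcd_iff, (hk _).ne', Fin.removeNth_apply]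
  have hk' : ∀ j, 0 < p.removeNth k j := fun j => hk _
  rw [Nfun_eq_sum_totient hk, Nfun_eq_sum_totient hk',
    Nfun_eq_sum_totient fun j => Nat.gcd_pos_of_pos_left _ (hk p), split_union, ← inter_eq,
    ← sum_totient_divisors, ← sum_union_inter, add_sub_cancel_right]

end GcdSum

section Castling

variable {n : ℕ}

/-- The product of the dimensions other than `d p`. -/
def complDim (d : Fin (n + 1) → ℕ) (p : Fin (n + 1)) : ℕ :=
  ∏ j, p.removeNth d j

/-- The castling transform at `p`, replacing `d p` by `complDim d p - d p`. It is meaningful only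
when `d p ≤ complDim d p`, since the subtraction is truncated. -/
def castle (d : Fin (n + 1) → ℕ) (p : Fin (n + 1)) : Fin (n + 1) → ℕ :=
  Function.update d p (complDim d p - d p)

lemma mul_complDim (d : Fin (n + 1) → ℕ) (p : Fin (n + 1)) : d p * complDim d p = ∏ i, d i :=
  Fin.mul_prod_removeNth p d

lemma castle_self (d : Fin (n + 1) → ℕ) (p : Fin (n + 1)) :
    castle d p p = complDim d p - d p :=
  Function.update_self ..

lemma removeNth_castle (d : Fin (n + 1) → ℕ) (p : Fin (n + 1)) :
    p.removeNth (castle d p) = p.removeNth d :=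
  Fin.removeNth_update ..

lemma complDim_castle (d : Fin (n + 1) → ℕ) (p : Fin (n + 1)) :
    complDim (castle d p) p = complDim d p := by
  rw [complDim, removeNth_castle, complDim]

lemma castle_castle {d : Fin (n + 1) → ℕ} {p : Fin (n + 1)} (h : d p ≤ complDim d p) :
    castle (castle d p) p = d := by
  rw [castle, complDim_castle, castle_self, Nat.sub_sub_self h, castle, Function.update_idem,
    Function.update_eq_self]

lemma castle_pos {d : Fin (n + 1) → ℕ} (hd : ∀ i, 0 < d i) {p : Fin (n + 1)}
    (h : d p < complDim d p) (i : Fin (n + 1)) : 0 < castle d p i := by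
  rcases eq_or_ne i p with rfl | hi
  · rw [castle_self]
    exact Nat.sub_pos_of_lt h
  · rw [castle, Function.update_of_ne hi]
    exact hd i

lemma sum_castle_lt {d : Fin (n + 1) → ℕ} {p : Fin (n + 1)} (h : complDim d p < 2 * d p) :
    ∑ i, castle d p i < ∑ i, d i := by
  have hp : castle d p p < d p := by
    rw [castle_self]
    omega
  refine sum_lt_sum (fun i _ => ?_) ⟨p, mem_univ p, hp⟩
  rcases eq_or_ne i p with rfl | hi
  · exact hp.le
  · rw [castle, Function.update_of_ne hi]

lemma Rfun_eq_removeNth {d : Fin (n + 1) → ℕ} (hd : ∀ i, 0 < d i) (p : Fin (n + 1)) :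
    Rfun d = d p * (complDim d p - d p) - Nfun (fun j => p.removeNth d j ^ 2) +
      Nfun fun j => ((d p).gcd (p.removeNth d j)) ^ 2 := by
  have hprod : (∏ i, (d i : ℤ)) = d p * complDim d p := by exact_mod_cast (mul_complDim d p).symm
  have hsq : p.removeNth (fun i => d i ^ 2) = fun j => p.removeNth d j ^ 2 := rfl
  rw [Rfun, hprod, Nfun_eq_removeNth (fun i => pow_pos (hd i) 2) p, hsq]
  simp only [Nat.pow_gcd_pow]
  push_cast
  ring

theorem Rfun_castle {d : Fin (n + 1) → ℕ} (hd : ∀ i, 0 < d i) {p : Fin (n + 1)}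
    (h : d p < complDim d p) : Rfun (castle d p) = Rfun d := by
  have gcd_eq (j : Fin n) :
      (complDim d p - d p).gcd (p.removeNth d j) = (d p).gcd (p.removeNth d j) :=
    Nat.gcd_sub_left_left_of_dvd _ h.le (dvd_prod_of_mem _ (mem_univ j))
  rw [Rfun_eq_removeNth hd p, Rfun_eq_removeNth (castle_pos hd h) p]
  simp only [removeNth_castle, complDim_castle, castle_self, gcd_eq, Nat.cast_sub h.le]
  ring

lemma Rfun_neg_of_complDim_lt {d : Fin (n + 1) → ℕ} (hd : ∀ i, 0 < d i) {p : Fin (n + 1)}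
    (h : complDim d p < d p) : Rfun d < 0 := by
  have hprod : (∏ i, (d i : ℤ)) = d p * complDim d p := by exact_mod_cast (mul_complDim d p).symm
  have hN := le_Nfun (fun i => pow_pos (hd i) 2) p
  have hlt : (d p : ℤ) * complDim d p < (d p : ℤ) ^ 2 := by
    rw [sq]
    exact mul_lt_mul_of_pos_left (by exact_mod_cast h) (by exact_mod_cast hd p)
  push_cast at hN
  rw [Rfun, hprod]
  linarith

lemma Rfun_eq_zero_of_eq_complDim {d : Fin (n + 1) → ℕ} (hd : ∀ i, 0 < d i) {p : Fin (n + 1)}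
    (h : d p = complDim d p) : Rfun d = 0 := by
  have hdvd (i : Fin (n + 1)) : d i ∣ d p := by
    rcases p.eq_self_or_eq_succAbove i with rfl | ⟨j, rfl⟩
    · rfl
    · exact h ▸ dvd_prod_of_mem (p.removeNth d) (mem_univ j)
  have hprod : (∏ i, (d i : ℤ)) = d p * d p := by
    exact_mod_cast (mul_complDim d p).symm.trans (by rw [← h])
  rw [Rfun, hprod, Nfun_eq_of_forall_dvd (p := p) (fun i => pow_pos (hd i) 2)
    fun i => pow_dvd_pow_of_dvd (hdvd i) 2]
  push_cast
  ring

end Castling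

section BlockProd

variable {n m : ℕ}

/-- The dimensions obtained by merging the tensor factors in each fibre of `f` into one. -/
def blockProd (d : Fin n → ℕ) (f : Fin n → Fin m) (k : Fin m) : ℕ :=
  ∏ i with f i = k, d i

lemma blockProd_pos {d : Fin n → ℕ} (hd : ∀ i, 0 < d i) (f : Fin n → Fin m) (k : Fin m) :
    0 < blockProd d f k :=
  prod_pos fun i _ => hd i

lemma dvd_blockProd (d : Fin n → ℕ) (f : Fin n → Fin m) (i : Fin n) : d i ∣ blockProd d f (f i) :=
  dvd_prod_of_mem d (mem_filter_univ i |>.2 rfl)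

lemma prod_blockProd (d : Fin n → ℕ) (f : Fin n → Fin m) : ∏ k, blockProd d f k = ∏ i, d i :=
  prod_fiberwise univ f d

lemma blockProd_equiv_symm (d : Fin n → ℕ) (σ : Equiv.Perm (Fin n)) :
    blockProd d σ.symm = d ∘ σ := by
  ext k
  simp [blockProd, Equiv.symm_apply_eq, filter_eq']

lemma blockProd_perm_comp (d : Fin n → ℕ) (f : Fin n → Fin m) (σ : Equiv.Perm (Fin m)) :
    blockProd d (σ.symm ∘ f) = blockProd d f ∘ σ := by
  ext k
  simp [blockProd, Equiv.symm_apply_eq]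

lemma Rfun_blockProd_le {d : Fin n → ℕ} (hd : ∀ i, 0 < d i) (f : Fin n → Fin m) :
    Rfun (blockProd d f) ≤ Rfun d := by
  have hprod : (∏ k, (blockProd d f k : ℤ)) = ∏ i, (d i : ℤ) := by
    exact_mod_cast prod_blockProd d f
  rw [Rfun, Rfun, hprod]
  exact sub_le_sub_left (Nfun_le_of_forall_exists_dvd (fun i => pow_pos (hd i) 2)
    (fun k => pow_pos (blockProd_pos hd f k) 2)
    fun i => ⟨f i, pow_dvd_pow_of_dvd (dvd_blockProd d f i) 2⟩) _

end BlockProd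

section ThreeFactors

lemma Dfun_le_Rfun {n : ℕ} {d : Fin n → ℕ} (hd : ∀ i, 0 < d i) : Dfun d ≤ Rfun d := by
  have hN := Nfun_le_one_add_sum fun i => pow_pos (hd i) 2
  push_cast at hN
  rw [Dfun, Rfun]
  linarith

lemma Rfun_two_self_self_nonneg {b : ℕ} (hb : 2 ≤ b) : 0 ≤ Rfun ![2, b, b] := by
  have hb₀ : 0 < b := by omega
  have hmerge : Nfun (fun i => ![2, b, b] i ^ 2) ≤ Nfun ![4, b ^ 2] :=
    Nfun_le_of_forall_exists_dvd (by simp [Fin.forall_fin_succ, hb₀])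
      (by simp [Fin.forall_fin_succ, hb₀]) (by simp [Fin.forall_fin_succ, Fin.exists_fin_succ])
  have hbound : Nfun ![4, b ^ 2] ≤ b ^ 2 + 3 :=
    (Nfun_le_one_add_sum (by simp [Fin.forall_fin_succ, hb₀])).trans_eq (by simp; ring)
  rw [Rfun, Fin.prod_univ_three]
  change 0 ≤ (2 * b * b : ℤ) - Nfun fun i => ![2, b, b] i ^ 2
  nlinarith

theorem Rfun_fin_three_nonneg {a b c : ℕ} (ha : 2 ≤ a) (hab : a ≤ b) (hbc : b ≤ c)
    (hc : 2 * c ≤ a * b) : 0 ≤ Rfun ![a, b, c] := by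
  rcases ha.eq_or_lt with rfl | ha
  · obtain rfl : b = c := by omega
    exact Rfun_two_self_self_nonneg hab
  · refine le_trans ?_ (Dfun_le_Rfun (by simp [Fin.forall_fin_succ]; omega))
    rw [Dfun, Fin.prod_univ_three, Fin.sum_univ_three]
    change (0 : ℤ) ≤ a * b * c - 1 - ((a ^ 2 - 1) + (b ^ 2 - 1) + (c ^ 2 - 1))
    zify at *
    have increasing : 0 ≤ (c - b : ℤ) * (a * b - c - b) := mul_nonneg (by linarith) (by nlinarith)
    nlinarith

end ThreeFactors

section Bridge

lemma normalized_iff_dotProduct {n : ℕ} {d : Fin n → ℕ} (ψ : (∀ i, Fin (d i)) → ℂ) :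
    Normalized ψ ↔ ψ ⬝ᵥ star ψ = 1 := by
  have dotProduct_eq : ψ ⬝ᵥ star ψ = ((∑ x, ‖ψ x‖ ^ 2 : ℝ) : ℂ) := by
    simp [dotProduct, RCLike.mul_conj]
  rw [dotProduct_eq, Complex.ofReal_eq_one, Normalized]

theorem lmeExists_iff_hasLME {n : ℕ} {d : Fin n → ℕ} :
    LMEExists n d ↔ HasLME fun i => Fin (d i) := by
  have rhoK_eq (ψ : (∀ i, Fin (d i)) → ℂ) (k : Fin n) :
      rhoK d ψ k = marginal k (vecMulVec ψ (star ψ)) := rfl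
  refine exists_congr fun ψ => ?_
  rw [IsLME, normalized_iff_dotProduct]
  refine and_congr_right fun hψ => ⟨fun h k => ⟨_, h k⟩, fun h k => ?_⟩
  rw [rhoK_eq, h.marginal_eq k, trace_vecMulVec, hψ, Fintype.card_fin]

end Bridge

/-! ### Constructible dimensions -/

section Constructible

/-- The dimensions that can be obtained from balanced bipartitions and from three comparable
factors by castling and by splitting factors. -/
inductive Constructible : ∀ {n : ℕ}, (Fin n → ℕ) → Prop
  | balanced {n : ℕ} {d : Fin (n + 1) → ℕ} (p : Fin (n + 1)) (h : d p = complDim d p) :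
      Constructible d
  | three {a b c : ℕ} (ha : 2 ≤ a) (hab : a ≤ b) (hbc : b ≤ c) (hc : 2 * c ≤ a * b) :
      Constructible ![a, b, c]
  | of_castle {n : ℕ} {d : Fin (n + 1) → ℕ} (p : Fin (n + 1)) (h : d p < complDim d p) :
      Constructible (castle d p) → Constructible d
  | of_blockProd {n m : ℕ} {d : Fin n → ℕ} (f : Fin n → Fin m) :
      Constructible (blockProd d f) → Constructible d

lemma hasLME_of_eq_complDim {n : ℕ} {d : Fin (n + 1) → ℕ} (hd : ∀ i, 0 < d i) {p : Fin (n + 1)}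
    (h : d p = complDim d p) : HasLME fun i => Fin (d i) := by
  have : NeZero (d p) := ⟨(hd p).ne'⟩
  have hcard : d p = ∏ j, card (Fin (d (p.succAbove j))) := by
    simp only [Fintype.card_fin]
    exact h
  rw [hasLME_iff_hasUniformProjection p, Fintype.card_fin, hcard]
  exact HasUniformProjection.card

lemma hasLME_castle {n : ℕ} {d : Fin (n + 1) → ℕ} (hd : ∀ i, 0 < d i) {p : Fin (n + 1)}
    (h : d p < complDim d p) (hLME : HasLME fun i => Fin (d i)) :
    HasLME fun i => Fin (castle d p i) := by
  have : NeZero (d p) := ⟨(hd p).ne'⟩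
  have : NeZero (castle d p p) := ⟨(castle_pos hd h p).ne'⟩
  rw [hasLME_iff_hasUniformProjection p, Fintype.card_fin] at hLME ⊢
  rw [castle_self]
  have hcompl : d p + (complDim d p - d p) = ∏ j, card (Fin (d (p.succAbove j))) := by
    simp only [Fintype.card_fin]
    exact Nat.add_sub_of_le h.le
  refine (hLME.complement hcompl).of_card_eq fun j => ?_
  simp [castle]

lemma HasLME.of_blockProd {n m : ℕ} {d : Fin n → ℕ} {f : Fin n → Fin m}
    (h : HasLME fun k => Fin (blockProd d f k)) : HasLME fun i => Fin (d i) := by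
  refine .of_grouping (f := f) (h.of_card_eq fun k => ?_)
  rw [Fintype.card_fin, Fintype.card_pi, blockProd, ← prod_subtype_eq_prod_filter, subtype_univ]
  simp only [Fintype.card_fin]

lemma Constructible.hasLME {n : ℕ} {d : Fin n → ℕ} (h : Constructible d) (hd : ∀ i, 0 < d i) :
    HasLME fun i => Fin (d i) := by
  induction h with
  | balanced p h => exact hasLME_of_eq_complDim hd h
  | three ha hab hbc hc => exact hasLME_fin_three ha hab hbc hc
  | @of_castle n d p h _ ih =>
    have hlt : castle d p p < complDim (castle d p) p := by
      rw [castle_self, complDim_castle]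
      exact Nat.sub_lt (by omega) (hd p)
    have hLME := hasLME_castle (castle_pos hd h) hlt (ih (castle_pos hd h))
    rwa [castle_castle h.le] at hLME
  | of_blockProd f _ ih => exact (ih (blockProd_pos hd f)).of_blockProd

lemma Constructible.Rfun_nonneg {n : ℕ} {d : Fin n → ℕ} (h : Constructible d)
    (hd : ∀ i, 0 < d i) : 0 ≤ Rfun d := by
  induction h with
  | balanced p h => exact (Rfun_eq_zero_of_eq_complDim hd h).ge
  | three ha hab hbc hc => exact Rfun_fin_three_nonneg ha hab hbc hc
  | of_castle p h _ ih => exact Rfun_castle hd h ▸ ih (castle_pos hd h)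
  | of_blockProd f _ ih => exact (ih (blockProd_pos hd f)).trans (Rfun_blockProd_le hd f)

end Constructible

section ConstructibleTriples

lemma complDim_fin_three (a b c : ℕ) : complDim ![a, b, c] 2 = a * b :=
  Fin.prod_univ_two _

namespace Constructible

variable {a b c : ℕ}

lemma of_comp_perm {n : ℕ} {d : Fin n → ℕ} (σ : Equiv.Perm (Fin n)) (h : Constructible (d ∘ σ)) :
    Constructible d :=
  .of_blockProd σ.symm (blockProd_equiv_symm d σ ▸ h)

lemma swap_right (h : Constructible ![a, c, b]) : Constructible ![a, b, c] := by
  have comp_swap : ![a, b, c] ∘ Equiv.swap (1 : Fin 3) 2 = ![a, c, b] := by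
    ext k
    fin_cases k <;> rfl
  exact .of_comp_perm (Equiv.swap 1 2) (comp_swap ▸ h)

lemma mul_right (a b : ℕ) : Constructible ![a, b, a * b] :=
  .balanced 2 (complDim_fin_three a b _).symm

lemma of_mul_sub (hc : c < a * b) (h : Constructible ![a, b, a * b - c]) :
    Constructible ![a, b, c] := by
  have castle_eq : castle ![a, b, c] 2 = ![a, b, a * b - c] := by
    rw [castle, complDim_fin_three]
    ext k
    fin_cases k <;> rfl
  exact .of_castle 2 (by rwa [complDim_fin_three]) (castle_eq ▸ h)

lemma three_of_lt (ha : 2 ≤ a) (hab : a < b) (hcb : c ≤ b) (hc : a * b ≤ a * a + c) :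
    Constructible ![a, b, c] := by
  obtain ⟨u, rfl⟩ := Nat.exists_eq_add_of_lt hab
  have hac : a * (u + 1) ≤ c := by linarith
  apply swap_right
  by_cases hlarge : 2 * (a + u + 1) ≤ a * c
  · exact .three ha (by nlinarith) hcb hlarge
  obtain rfl : u = 0 := by
    by_contra hu
    nlinarith [Nat.pos_of_ne_zero hu, Nat.mul_le_mul_left a hac,
      Nat.mul_le_mul_right (a * (u + 1)) ha]
  obtain rfl : a = 2 := by
    by_contra hne
    have : 3 ≤ a := by omega
    nlinarith [Nat.mul_le_mul_left a hac]
  obtain rfl : c = 2 := by omega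
  exact of_mul_sub (by norm_num) (swap_right (mul_right 2 1))

lemma three_of_le_of_le {x y : ℕ} (ha : 2 ≤ a) (hab : a ≤ b) (hb : b ≤ x * y)
    (hx : x ≤ a) (hy : y ≤ a) : Constructible ![a, b, x * y] := by
  by_cases hsmall : 2 * (x * y) ≤ a * b
  · exact .three ha hab hb hsmall
  have hsq : x * y ≤ a * a := Nat.mul_le_mul hx hy
  have hsqb : a * a ≤ a * b := Nat.mul_le_mul_left a hab
  rcases (hsq.trans hsqb).eq_or_lt with heq | hlt
  · exact heq ▸ mul_right a b
  apply of_mul_sub hlt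
  by_cases hbc : b ≤ a * b - x * y
  · exact .three ha hab hbc (by omega)
  have hne : a ≠ b := by
    rintro rfl
    have gap : x * y + a ≤ a * a := by
      rcases hx.eq_or_lt with rfl | hx
      · nlinarith [lt_of_mul_lt_mul_left hlt (Nat.zero_le _)]
      · nlinarith
    omega
  exact three_of_lt ha (hab.lt_of_ne hne) (by omega) (by omega)

end Constructible

end ConstructibleTriples

section OptimalGrouping

variable {n m : ℕ}

lemma exists_monotone_blockProd_forall_sum_le (d : Fin n → ℕ) (m : ℕ) :
    ∃ f : Fin n → Fin (m + 1), Monotone (blockProd d f) ∧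
      ∀ g : Fin n → Fin (m + 1), ∑ k, blockProd d f k ≤ ∑ k, blockProd d g k := by
  obtain ⟨f, hf⟩ := Finite.exists_min fun f : Fin n → Fin (m + 1) => ∑ k, blockProd d f k
  refine ⟨(Tuple.sort (blockProd d f)).symm ∘ f, ?_, fun g => ?_⟩
  · rw [blockProd_perm_comp]
    exact Tuple.monotone_sort _
  · rw [blockProd_perm_comp]
    exact (Equiv.sum_comp _ (blockProd d f)).trans_le (hf g)

lemma prod_sdiff_le_blockProd {d : Fin n → ℕ} {f : Fin n → Fin m}
    (hmin : ∀ g : Fin n → Fin m, ∑ k, blockProd d f k ≤ ∑ k, blockProd d g k) {j l : Fin m}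
    (hjl : j ≠ l) {S : Finset (Fin n)} (hS : S ⊆ univ.filter (f · = l)) (hS₂ : 2 ≤ ∏ i ∈ S, d i) :
    ∏ i ∈ univ.filter (f · = l) \ S, d i ≤ blockProd d f j := by
  have f_eq {i : Fin n} (hi : i ∈ S) : f i = l := by simpa using hS hi
  let g (i : Fin n) : Fin m := if i ∈ S then j else f i
  have blockProd_j : blockProd d g j = blockProd d f j * ∏ i ∈ S, d i := by
    rw [blockProd, blockProd, ← prod_union]
    · congr 1
      ext i
      by_cases hi : i ∈ S <;> simp [g, hi]
    · exact disjoint_left.2 fun i hi hiS => hjl ((mem_filter_univ i |>.1 hi).symm.trans (f_eq hiS))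
  have blockProd_l : blockProd d g l = ∏ i ∈ univ.filter (f · = l) \ S, d i := by
    rw [blockProd]
    congr 1
    ext i
    by_cases hi : i ∈ S <;> simp [g, hi, hjl]
  have blockProd_of_ne {k : Fin m} (hkj : k ≠ j) (hkl : k ≠ l) :
      blockProd d g k = blockProd d f k := by
    rw [blockProd, blockProd]
    congr 1
    ext i
    by_cases hi : i ∈ S <;> simp [g, hi, f_eq, hkj.symm, hkl.symm]
  have split : blockProd d f l = (∏ i ∈ univ.filter (f · = l) \ S, d i) * ∏ i ∈ S, d i :=
    (prod_sdiff hS).symm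
  have pair_le : blockProd d f j + blockProd d f l ≤ blockProd d g j + blockProd d g l := by
    have hoff : ∑ k ∈ {j, l}ᶜ, blockProd d g k = ∑ k ∈ {j, l}ᶜ, blockProd d f k := by
      refine sum_congr rfl fun k hk => ?_
      simp only [mem_compl, mem_insert, mem_singleton, not_or] at hk
      exact blockProd_of_ne hk.1 hk.2
    have hsum := hmin g
    rw [← sum_add_sum_compl {j, l} (blockProd d f), ← sum_add_sum_compl {j, l} (blockProd d g),
      sum_pair hjl, sum_pair hjl, hoff] at hsum
    exact le_of_add_le_add_right hsum
  rw [blockProd_j, blockProd_l, split] at pair_le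
  nlinarith

lemma exists_two_le_of_two_mul_le_complDim {d : Fin (n + 1) → ℕ} (hd : ∀ i, 0 < d i)
    (hr : ∀ p, 2 * d p ≤ complDim d p) {f : Fin (n + 1) → Fin (m + 1)}
    (hf : Monotone (blockProd d f)) : ∃ k, f k = Fin.last m ∧ 2 ≤ d k := by
  have hprod : 1 < ∏ i, d i := by
    rw [← mul_complDim d 0]
    nlinarith [hd 0, hr 0]
  have hlast : blockProd d f (Fin.last m) ≠ 1 := by
    intro hone
    refine hprod.not_ge ?_
    rw [← prod_blockProd d f]
    exact prod_le_one' fun k _ => (hf (Fin.le_last k)).trans_eq hone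
  obtain ⟨k, hk, hne⟩ := exists_ne_one_of_prod_ne_one hlast
  exact ⟨k, by simpa using hk, lt_of_le_of_ne' (hd k) hne⟩

theorem constructible_of_two_mul_le_complDim {d : Fin (n + 1) → ℕ} (hd : ∀ i, 0 < d i)
    (hr : ∀ p, 2 * d p ≤ complDim d p) : Constructible d := by
  obtain ⟨f, hmono, hmin⟩ := exists_monotone_blockProd_forall_sum_le d 2
  obtain ⟨k, hk, hdk⟩ := exists_two_le_of_two_mul_le_complDim hd hr hmono
  set a := blockProd d f 0
  set b := blockProd d f 1
  let F : Finset (Fin (n + 1)) := univ.filter (f · = 2)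
  let y := ∏ i ∈ F.erase k, d i
  have hkF : k ∈ F := by simpa [F] using hk
  have hsplit : blockProd d f 2 = d k * y := (mul_prod_erase F d hkF).symm
  have hab : a ≤ b := hmono (by decide)
  have hbc : b ≤ d k * y := hsplit ▸ hmono (by decide)
  have hblocks : blockProd d f = ![a, b, d k * y] := by
    rw [← hsplit]
    ext j
    fin_cases j <;> rfl
  refine .of_blockProd f (hblocks ▸ ?_)
  have move_to_first {S : Finset (Fin (n + 1))} (hS : S ⊆ F) (hS₂ : 2 ≤ ∏ i ∈ S, d i) :
      ∏ i ∈ F \ S, d i ≤ a :=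
    prod_sdiff_le_blockProd hmin (by decide) hS hS₂
  have hy₀ : 0 < y := prod_pos fun i _ => hd i
  rcases eq_or_ne y 1 with hy | hy
  · have hcompl : d k * complDim d k = d k * (a * b) := by
      rw [mul_complDim, ← prod_blockProd d f, Fin.prod_univ_three, hsplit, hy]
      ring
    have htwo : 2 * (d k * y) ≤ a * b := by
      rw [← Nat.eq_of_mul_eq_mul_left (hd k) hcompl, hy, mul_one]
      exact hr k
    have ha : 2 ≤ a :=
      le_of_mul_le_mul_right ((Nat.mul_le_mul_left 2 hbc).trans htwo) (blockProd_pos hd f 1)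
    exact .three ha hab hbc htwo
  · have hya : y ≤ a := by
      have hle := move_to_first (S := {k}) (by simpa using hkF) (by simpa using hdk)
      rwa [sdiff_singleton_eq_erase] at hle
    have hxa : d k ≤ a := by
      have hle := move_to_first (erase_subset k F) (lt_of_le_of_ne' hy₀ hy)
      rwa [sdiff_erase_self hkF, prod_singleton] at hle
    exact .three_of_le_of_le (hdk.trans hxa) hab hbc hxa hya

end OptimalGrouping

section Main

variable {n : ℕ}

theorem constructible_of_castle_invariant {Q : (Fin (n + 1) → ℕ) → Prop}
    (hle : ∀ d, (∀ i, 0 < d i) → Q d → ∀ p, d p ≤ complDim d p)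
    (hcastle : ∀ d, (∀ i, 0 < d i) → Q d → ∀ p, d p < complDim d p → Q (castle d p))
    {d : Fin (n + 1) → ℕ} (hd : ∀ i, 0 < d i) (hQ : Q d) : Constructible d := by
  induction hN : ∑ i, d i using Nat.strong_induction_on generalizing d with
  | _ N ih =>
    by_cases hr : ∀ p, 2 * d p ≤ complDim d p
    · exact constructible_of_two_mul_le_complDim hd hr
    push Not at hr
    obtain ⟨p, hp⟩ := hr
    rcases (hle d hd hQ p).eq_or_lt with heq | hlt
    · exact .balanced p heq
    · exact .of_castle p hlt
        (ih _ (hN ▸ sum_castle_lt hp) (castle_pos hd hlt) (hcastle d hd hQ p hlt) rfl)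

theorem constructible_iff_hasLME {d : Fin (n + 1) → ℕ} (hd : ∀ i, 0 < d i) :
    Constructible d ↔ HasLME fun i => Fin (d i) := by
  refine ⟨fun h => h.hasLME hd, constructible_of_castle_invariant
    (Q := fun d => HasLME fun i => Fin (d i)) (fun d hd h p => ?_)
    (fun d hd h p hlt => hasLME_castle hd hlt h) hd⟩
  have : NeZero (d p) := ⟨(hd p).ne'⟩
  simpa [complDim, Fin.removeNth] using ((hasLME_iff_hasUniformProjection p).1 h).le_card

theorem constructible_iff_Rfun_nonneg {d : Fin (n + 1) → ℕ} (hd : ∀ i, 0 < d i) :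
    Constructible d ↔ 0 ≤ Rfun d :=
  ⟨fun h => h.Rfun_nonneg hd, constructible_of_castle_invariant (Q := fun d => 0 ≤ Rfun d)
    (fun _ hd h _ => not_lt.1 fun hlt => h.not_gt (Rfun_neg_of_complDim_lt hd hlt))
    (fun _ hd h _ hlt => (Rfun_castle hd hlt).symm ▸ h) hd⟩

end Main

/-- LME states exist for dimensions `d` iff `R(d) ≥ 0`. -/
theorem lme_exists_iff_R_nonneg (n : ℕ) (hn : 1 ≤ n) (d : Fin n → ℕ)
    (hd : ∀ i, 1 ≤ d i) :
    LMEExists n d ↔ 0 ≤ Rfun d := by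
  obtain ⟨m, rfl⟩ := Nat.exists_eq_add_of_le' hn
  rw [lmeExists_iff_hasLME, ← constructible_iff_hasLME hd, constructible_iff_Rfun_nonneg hd]
end
end

section
/- Let A, d₂, d₃ be integers with 2 ≤ A ≤ d₂ ≤ d₃. Suppose LME states exist for the tripartite dimensions (A, d₂, d₃) and Δ(A, d₂, d₃) < 0. Define S_A to be the set of pairs (b, c) of positive integers such that 2·b ≤ A·c, 2·c ≤ A·b, b·c ≥ A, A·b·c − A² − b² − c² + 4 ≤ 0, and LME states exist for dimensions (b, c, A). Then there exist a sequence f : ℕ → ℕ and an index i such that f(j+1) + f(j−1) = A·f(j) for all j ≥ 1, (d₂, d₃) = (f(i), f(i+1)), and either (f(0), f(1)) = (k, k·A) for some positive integer k, or (f(0), f(1)) ∈ S_A. -/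
/-!
Up to scaling, an LME state of dimensions `(A, B, C)` is an isometry `ℂ^C → ℂ^A ⊗ ℂ^B` whose range
projection has scalar partial traces. The complementary projection then has scalar partial traces
as well, so LME states for `(A, B, C)` give LME states for `(A, B, A * B - C)` when `C < A * B`.
This castling transform preserves `Δ`, and one step of `f (j + 1) = A * f j - f (j - 1)` is a
castling transform with `A` fixed. Undoing such steps on `(A, b, c)`, `b ≤ c`, lowers the larger
entry until the pair is `(k, k * A)` or lies in `S_A`; the inequality `Δ ≤ -2` in `S_A` comes from
`Δ < 0` because `Δ = -1` has no solution modulo `4`.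
-/

open scoped ComplexConjugate

noncomputable section

def rho1 {A B C : ℕ} (ψ : Fin A × Fin B × Fin C → ℂ) : Matrix (Fin A) (Fin A) ℂ :=
  Matrix.of fun a a' => ∑ b, ∑ c, ψ (a, b, c) * conj (ψ (a', b, c))

def rho2 {A B C : ℕ} (ψ : Fin A × Fin B × Fin C → ℂ) : Matrix (Fin B) (Fin B) ℂ :=
  Matrix.of fun b b' => ∑ a, ∑ c, ψ (a, b, c) * conj (ψ (a, b', c))

def rho3 {A B C : ℕ} (ψ : Fin A × Fin B × Fin C → ℂ) : Matrix (Fin C) (Fin C) ℂ :=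
  Matrix.of fun c c' => ∑ a, ∑ b, ψ (a, b, c) * conj (ψ (a, b, c'))

def TriNormalized {A B C : ℕ} (ψ : Fin A × Fin B × Fin C → ℂ) : Prop :=
  ∑ x, ‖ψ x‖ ^ 2 = 1

def TriIsLME {A B C : ℕ} (ψ : Fin A × Fin B × Fin C → ℂ) : Prop :=
  TriNormalized ψ ∧ rho1 ψ = (1 / (A : ℂ)) • 1 ∧
    rho2 ψ = (1 / (B : ℂ)) • 1 ∧ rho3 ψ = (1 / (C : ℂ)) • 1

def TriLMEExists (A B C : ℕ) : Prop := ∃ ψ : Fin A × Fin B × Fin C → ℂ, TriIsLME ψ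

/-- The finite exceptional set S_A of Proposition 5.4. -/
def SApair (A b c : ℕ) : Prop :=
  1 ≤ b ∧ 1 ≤ c ∧ 2 * b ≤ A * c ∧ 2 * c ≤ A * b ∧ A ≤ b * c ∧
    (A : ℤ) * b * c - (A : ℤ) ^ 2 - (b : ℤ) ^ 2 - (c : ℤ) ^ 2 + 4 ≤ 0 ∧
    TriLMEExists b c A

section Matrix

variable {𝕜 m n k l : Type*}

/-- The partial trace over the second tensor factor. -/
def partialTraceRight [CommSemiring 𝕜] [Fintype n] :
    Matrix (m × n) (m × n) 𝕜 →ₗ[𝕜] Matrix m m 𝕜 where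
  toFun M := Matrix.of fun i i' => ∑ j, M (i, j) (i', j)
  map_add' M N := by ext; simp [Finset.sum_add_distrib]
  map_smul' c M := by ext; simp [Finset.mul_sum]

/-- The partial trace over the first tensor factor. -/
def partialTraceLeft [CommSemiring 𝕜] [Fintype m] :
    Matrix (m × n) (m × n) 𝕜 →ₗ[𝕜] Matrix n n 𝕜 where
  toFun M := Matrix.of fun j j' => ∑ i, M (i, j) (i, j')
  map_add' M N := by ext; simp [Finset.sum_add_distrib]
  map_smul' c M := by ext; simp [Finset.mul_sum]

lemma partialTraceRight_apply [CommSemiring 𝕜] [Fintype n] (M : Matrix (m × n) (m × n) 𝕜)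
    (i i' : m) : partialTraceRight M i i' = ∑ j, M (i, j) (i', j) := rfl

lemma partialTraceLeft_apply [CommSemiring 𝕜] [Fintype m] (M : Matrix (m × n) (m × n) 𝕜)
    (j j' : n) : partialTraceLeft M j j' = ∑ i, M (i, j) (i, j') := rfl

lemma partialTraceRight_one [CommSemiring 𝕜] [Fintype n] [DecidableEq m] [DecidableEq n] :
    partialTraceRight (1 : Matrix (m × n) (m × n) 𝕜) = (Fintype.card n : 𝕜) • 1 := by
  ext i i'
  simp [partialTraceRight_apply, Matrix.one_apply]

lemma partialTraceLeft_one [CommSemiring 𝕜] [Fintype m] [DecidableEq m] [DecidableEq n] :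
    partialTraceLeft (1 : Matrix (m × n) (m × n) 𝕜) = (Fintype.card m : 𝕜) • 1 := by
  ext j j'
  simp [partialTraceLeft_apply, Matrix.one_apply]

variable [RCLike 𝕜] [Fintype m]

lemma conjTranspose_mul_self_eq_one_iff_orthonormal [DecidableEq k] (V : Matrix m k 𝕜) :
    V.conjTranspose * V = 1 ↔
      Orthonormal 𝕜 fun j => (WithLp.toLp 2 (V.transpose j) : EuclideanSpace 𝕜 m) := by
  rw [← Matrix.gram_eq_one_iff_orthonormal, ← Matrix.ext_iff, ← Matrix.ext_iff]
  simp only [Matrix.gram_apply, inner_matrix_col_col]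

lemma card_le_card_of_conjTranspose_mul_self_eq_one [Fintype k] [DecidableEq k]
    {V : Matrix m k 𝕜} (hV : V.conjTranspose * V = 1) : Fintype.card k ≤ Fintype.card m := by
  calc Fintype.card k = (V.conjTranspose * V).rank := by rw [hV, Matrix.rank_one]
    _ ≤ V.rank := Matrix.rank_mul_le_right _ _
    _ ≤ Fintype.card m := V.rank_le_card_height

lemma exists_isometry_complement [Fintype k] [Fintype l] [DecidableEq m] [DecidableEq k]
    [DecidableEq l] {V : Matrix m k 𝕜} (hV : V.conjTranspose * V = 1)
    (hcard : Fintype.card k + Fintype.card l = Fintype.card m) :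
    ∃ W : Matrix m l 𝕜, W.conjTranspose * W = 1 ∧
      V * V.conjTranspose + W * W.conjTranspose = 1 := by
  let v : k ⊕ l → EuclideanSpace 𝕜 m := Sum.elim (fun j => WithLp.toLp 2 (V.transpose j)) 0
  have hv : Orthonormal 𝕜 ((Set.range Sum.inl).domRestrict v) := by
    obtain ⟨hnorm, hinner⟩ := (conjTranspose_mul_self_eq_one_iff_orthonormal V).mp hV
    constructor
    · rintro ⟨_, j, rfl⟩
      exact hnorm j
    · rintro ⟨_, j, rfl⟩ ⟨_, j', rfl⟩ hne
      exact hinner fun hjj' => hne (hjj' ▸ rfl)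
  obtain ⟨b, hb⟩ := hv.exists_orthonormalBasis_extension_of_card_eq
    (by rw [finrank_euclideanSpace, Fintype.card_sum, hcard])
  let W : Matrix m l 𝕜 := Matrix.of fun i j => b (Sum.inr j) i
  have hb_eq : ⇑b = fun j => WithLp.toLp 2 ((Matrix.fromCols V W).transpose j) := by
    funext j
    rcases j with j | j
    · rw [hb _ ⟨j, rfl⟩]
      rfl
    · rfl
  have hU : (Matrix.fromCols V W).conjTranspose * Matrix.fromCols V W = 1 :=
    (conjTranspose_mul_self_eq_one_iff_orthonormal _).mpr (hb_eq ▸ b.orthonormal)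
  have hU' : Matrix.fromCols V W * (Matrix.fromCols V W).conjTranspose = 1 :=
    (Matrix.mul_eq_one_comm_of_card_eq _ _ _ (by rw [Fintype.card_sum, hcard])).mp hU
  rw [Matrix.conjTranspose_fromCols_eq_fromRows_conjTranspose] at hU hU'
  rw [Matrix.fromRows_mul_fromCols, ← Matrix.fromBlocks_one, Matrix.fromBlocks_inj] at hU
  rw [Matrix.fromCols_mul_fromRows] at hU'
  exact ⟨W, hU.2.2.2, hU'⟩

end Matrix

section LME

variable {A B C D : ℕ}

lemma trace_rho3 (ψ : Fin A × Fin B × Fin C → ℂ) :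
    (rho3 ψ).trace = ((∑ x, ‖ψ x‖ ^ 2 : ℝ) : ℂ) := by
  calc (rho3 ψ).trace = ∑ c, ∑ a, ∑ b, ((‖ψ (a, b, c)‖ ^ 2 : ℝ) : ℂ) := by
        simp [Matrix.trace, rho3, Complex.mul_conj']
    _ = ∑ a, ∑ b, ∑ c, ((‖ψ (a, b, c)‖ ^ 2 : ℝ) : ℂ) := by
        rw [Finset.sum_comm]
        exact Finset.sum_congr rfl fun a _ => Finset.sum_comm
    _ = ((∑ x, ‖ψ x‖ ^ 2 : ℝ) : ℂ) := by
        simp only [Fintype.sum_prod_type, Complex.ofReal_sum]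

lemma triNormalized_of_rho3_eq (hC : 0 < C) {ψ : Fin A × Fin B × Fin C → ℂ}
    (h : rho3 ψ = (1 / (C : ℂ)) • 1) : TriNormalized ψ := by
  have hC₀ : (C : ℂ) ≠ 0 := Nat.cast_ne_zero.mpr hC.ne'
  have htrace : ((∑ x, ‖ψ x‖ ^ 2 : ℝ) : ℂ) = 1 := by
    rw [← trace_rho3, h, Matrix.trace_smul, Matrix.trace_one, Fintype.card_fin, smul_eq_mul,
      one_div_mul_cancel hC₀]
  exact Complex.ofReal_eq_one.mp htrace

/-- The tripartite state `C ^ (-1 / 2) • V`, for a matrix `V` from the third party to the other two.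
It is normalized when `V` is an isometry and `0 < C`. -/
def stateOfMatrix (V : Matrix (Fin A × Fin B) (Fin C) ℂ) : Fin A × Fin B × Fin C → ℂ :=
  fun x => (√C : ℂ)⁻¹ * V (x.1, x.2.1) x.2.2

lemma exists_stateOfMatrix_eq (hC : 0 < C) (ψ : Fin A × Fin B × Fin C → ℂ) :
    ∃ V, stateOfMatrix V = ψ := by
  have hsqrt : ((√C : ℝ) : ℂ) ≠ 0 := by
    exact_mod_cast (Real.sqrt_pos.mpr (Nat.cast_pos.mpr hC)).ne'
  refine ⟨Matrix.of fun p c => (√C : ℂ) * ψ (p.1, p.2, c), funext fun x => ?_⟩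
  exact inv_mul_cancel_left₀ hsqrt (ψ x)

lemma stateOfMatrix_mul_conj (V : Matrix (Fin A × Fin B) (Fin C) ℂ)
    (x y : Fin A × Fin B × Fin C) :
    stateOfMatrix V x * conj (stateOfMatrix V y) =
      1 / C * (V (x.1, x.2.1) x.2.2 * conj (V (y.1, y.2.1) y.2.2)) := by
  have hsqrt : (√C : ℂ)⁻¹ * (√C : ℂ)⁻¹ = 1 / C := by
    rw [← mul_inv, ← Complex.ofReal_mul, Real.mul_self_sqrt C.cast_nonneg,
      Complex.ofReal_natCast, one_div]
  simp only [stateOfMatrix, map_mul, map_inv₀, Complex.conj_ofReal]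
  rw [mul_mul_mul_comm, hsqrt]

lemma rho1_stateOfMatrix (V : Matrix (Fin A × Fin B) (Fin C) ℂ) :
    rho1 (stateOfMatrix V) = (1 / (C : ℂ)) • partialTraceRight (V * V.conjTranspose) := by
  ext a a'
  simp [rho1, stateOfMatrix_mul_conj, partialTraceRight_apply, Matrix.mul_apply, Finset.mul_sum]

lemma rho2_stateOfMatrix (V : Matrix (Fin A × Fin B) (Fin C) ℂ) :
    rho2 (stateOfMatrix V) = (1 / (C : ℂ)) • partialTraceLeft (V * V.conjTranspose) := by
  ext b b'
  simp [rho2, stateOfMatrix_mul_conj, partialTraceLeft_apply, Matrix.mul_apply, Finset.mul_sum]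

lemma rho3_stateOfMatrix (V : Matrix (Fin A × Fin B) (Fin C) ℂ) :
    rho3 (stateOfMatrix V) = (1 / (C : ℂ)) • (V.conjTranspose * V).transpose := by
  ext c c'
  simp [rho3, stateOfMatrix_mul_conj, Matrix.mul_apply, Finset.mul_sum, Fintype.sum_prod_type]

theorem triIsLME_stateOfMatrix_iff (hC : 0 < C) {V : Matrix (Fin A × Fin B) (Fin C) ℂ} :
    TriIsLME (stateOfMatrix V) ↔
      partialTraceRight (V * V.conjTranspose) = (C / A : ℂ) • 1 ∧
      partialTraceLeft (V * V.conjTranspose) = (C / B : ℂ) • 1 ∧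
      V.conjTranspose * V = 1 := by
  have hC₀ : (1 / C : ℂ) ≠ 0 := one_div_ne_zero (Nat.cast_ne_zero.mpr hC.ne')
  have rescale (d : ℕ) : (1 / d : ℂ) = 1 / C * (C / d) := by
    rw [one_div_mul_eq_div, div_div_cancel_left' (Nat.cast_ne_zero.mpr hC.ne'), one_div]
  rw [TriIsLME, and_iff_right_of_imp fun h => triNormalized_of_rho3_eq hC h.2.2,
    rho1_stateOfMatrix, rho2_stateOfMatrix, rho3_stateOfMatrix, rescale A, rescale B,
    mul_smul, mul_smul, smul_right_inj hC₀, smul_right_inj hC₀, smul_right_inj hC₀,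
    Matrix.transpose_eq_one]

namespace TriLMEExists

lemma pos (h : TriLMEExists A B C) : 0 < A ∧ 0 < B ∧ 0 < C := by
  obtain ⟨ψ, hψ, -⟩ := h
  obtain ⟨x, -⟩ := Finset.nonempty_of_sum_ne_zero (hψ.trans_ne one_ne_zero)
  exact ⟨x.1.pos, x.2.1.pos, x.2.2.pos⟩

lemma rotate (h : TriLMEExists A B C) : TriLMEExists B C A := by
  have hA : 0 < A := h.pos.1
  obtain ⟨ψ, -, h1, h2, h3⟩ := h
  let φ : Fin B × Fin C × Fin A → ℂ := fun x => ψ (x.2.2, x.1, x.2.1)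
  have hφ1 : rho1 φ = rho2 ψ := by
    ext
    simp only [rho1, rho2, Matrix.of_apply]
    exact Finset.sum_comm
  have hφ2 : rho2 φ = rho3 ψ := by
    ext
    simp only [rho2, rho3, Matrix.of_apply]
    exact Finset.sum_comm
  exact ⟨φ, triNormalized_of_rho3_eq hA h1, hφ1.trans h2, hφ2.trans h3, h1⟩

lemma swap_right (h : TriLMEExists A B C) : TriLMEExists A C B := by
  have hB : 0 < B := h.pos.2.1
  obtain ⟨ψ, -, h1, h2, h3⟩ := h
  let φ : Fin A × Fin C × Fin B → ℂ := fun x => ψ (x.1, x.2.2, x.2.1)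
  have hφ1 : rho1 φ = rho1 ψ := by
    ext
    simp only [rho1, Matrix.of_apply]
    exact Finset.sum_comm
  exact ⟨φ, triNormalized_of_rho3_eq hB h2, hφ1.trans h1, h3, h2⟩

lemma exists_stateOfMatrix (h : TriLMEExists A B C) :
    ∃ V : Matrix (Fin A × Fin B) (Fin C) ℂ, TriIsLME (stateOfMatrix V) := by
  have hC : 0 < C := h.pos.2.2
  obtain ⟨ψ, hψ⟩ := h
  obtain ⟨V, rfl⟩ := exists_stateOfMatrix_eq hC ψ
  exact ⟨V, hψ⟩

lemma le_mul (h : TriLMEExists A B C) : C ≤ A * B := by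
  obtain ⟨V, hψ⟩ := h.exists_stateOfMatrix
  have hV := ((triIsLME_stateOfMatrix_iff h.pos.2.2).mp hψ).2.2
  simpa using card_le_card_of_conjTranspose_mul_self_eq_one hV

theorem castling (h : TriLMEExists A B C) (hD : 0 < D) (hCD : C + D = A * B) :
    TriLMEExists A B D := by
  obtain ⟨hA, hB, hC⟩ := h.pos
  have hA₀ : (A : ℂ) ≠ 0 := Nat.cast_ne_zero.mpr hA.ne'
  have hB₀ : (B : ℂ) ≠ 0 := Nat.cast_ne_zero.mpr hB.ne'
  have hCD' : (C + D : ℂ) = A * B := by exact_mod_cast hCD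
  obtain ⟨V, hψ⟩ := h.exists_stateOfMatrix
  obtain ⟨hV1, hV2, hV⟩ := (triIsLME_stateOfMatrix_iff hC).mp hψ
  obtain ⟨W, hW, hVW⟩ := exists_isometry_complement (l := Fin D) hV (by simpa using hCD)
  refine ⟨stateOfMatrix W, (triIsLME_stateOfMatrix_iff hD).mpr ⟨?_, ?_, hW⟩⟩
  · rw [eq_sub_of_add_eq' hVW, map_sub, partialTraceRight_one, hV1, ← sub_smul, Fintype.card_fin]
    congr 1
    rw [sub_eq_iff_eq_add, ← add_div, eq_div_iff hA₀]
    linear_combination -hCD'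
  · rw [eq_sub_of_add_eq' hVW, map_sub, partialTraceLeft_one, hV2, ← sub_smul, Fintype.card_fin]
    congr 1
    rw [sub_eq_iff_eq_add, ← add_div, eq_div_iff hB₀]
    linear_combination -hCD'

end TriLMEExists

end LME

section Delta

lemma Dfun_fin_three (a b c : ℕ) :
    Dfun ![a, b, c] = (a : ℤ) * b * c - (a : ℤ) ^ 2 - (b : ℤ) ^ 2 - (c : ℤ) ^ 2 + 2 := by
  simp only [Dfun, Fin.prod_univ_three, Fin.sum_univ_three, Matrix.cons_val]
  ring

lemma Dfun_castling {a b c e : ℕ} (h : c + e = a * b) :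
    Dfun ![a, e, b] = Dfun ![a, b, c] := by
  have hc : (c : ℤ) = a * b - e := by
    rw [eq_sub_iff_add_eq]
    exact_mod_cast h
  rw [Dfun_fin_three, Dfun_fin_three, hc]
  ring

lemma Dfun_fin_three_ne_neg_one (a b c : ℕ) : Dfun ![a, b, c] ≠ -1 := by
  have mod_four : ∀ x y z : ZMod 4, x * y * z - x ^ 2 - y ^ 2 - z ^ 2 + 2 ≠ -1 := by decide
  intro h
  rw [Dfun_fin_three] at h
  exact mod_four a b c (by exact_mod_cast congrArg (Int.cast : ℤ → ZMod 4) h)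

lemma TriLMEExists.sApair {A b c : ℕ} (h : TriLMEExists A b c) (hΔ : Dfun ![A, b, c] < 0)
    (hb : 2 * b ≤ A * c) (hc : 2 * c ≤ A * b) : SApair A b c := by
  obtain ⟨-, hb₀, hc₀⟩ := h.pos
  refine ⟨hb₀, hc₀, hb, hc, h.rotate.le_mul, ?_, h.rotate⟩
  have hne := Dfun_fin_three_ne_neg_one A b c
  rw [Dfun_fin_three] at hΔ hne
  omega

end Delta

section CastlingSeq

variable {A b c : ℕ}

/-- The sequence `b, c, A * c - b, …` obtained by iterated castling with `A` fixed. The subtraction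
is truncated; it is exact when `2 ≤ A` and `b + c ≤ A * c`. -/
def castlingSeq (A b c : ℕ) : ℕ → ℕ
  | 0 => b
  | 1 => c
  | n + 2 => A * castlingSeq A b c (n + 1) - castlingSeq A b c n

lemma castlingSeq_add_succ_le (hA : 2 ≤ A) (h : b + c ≤ A * c) (n : ℕ) :
    castlingSeq A b c n + castlingSeq A b c (n + 1) ≤ A * castlingSeq A b c (n + 1) := by
  induction n with
  | zero => exact h
  | succ n ih =>
    have hmono : castlingSeq A b c (n + 1) ≤ castlingSeq A b c (n + 2) := by
      rw [castlingSeq]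
      exact Nat.le_sub_of_add_le' ih
    calc castlingSeq A b c (n + 1) + castlingSeq A b c (n + 2)
        ≤ 2 * castlingSeq A b c (n + 2) := by omega
      _ ≤ A * castlingSeq A b c (n + 2) := Nat.mul_le_mul_right _ hA

lemma castlingSeq_recurrence (hA : 2 ≤ A) (h : b + c ≤ A * c) (n : ℕ) :
    castlingSeq A b c (n + 2) + castlingSeq A b c n = A * castlingSeq A b c (n + 1) := by
  rw [castlingSeq]
  exact Nat.sub_add_cancel ((Nat.le_add_right _ _).trans (castlingSeq_add_succ_le hA h n))

/-- The admissible initial pairs of a castling sequence: `(k, k * A)` with `1 ≤ k`, or an element of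
`S_A`. -/
def IsCastlingSeed (A b c : ℕ) : Prop :=
  (∃ k, 1 ≤ k ∧ b = k ∧ c = k * A) ∨ SApair A b c

/-- The pair `(b, c)` consists of consecutive terms of a castling sequence started at a seed. -/
def OnSeededCastlingSeq (A b c : ℕ) : Prop :=
  ∃ b₀ c₀ i, IsCastlingSeed A b₀ c₀ ∧
    b = castlingSeq A b₀ c₀ i ∧ c = castlingSeq A b₀ c₀ (i + 1)

lemma IsCastlingSeed.add_le (hA : 2 ≤ A) (h : IsCastlingSeed A b c) : b + c ≤ A * c := by
  have hb : 2 * b ≤ A * c := by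
    rcases h with ⟨k, -, rfl, rfl⟩ | ⟨-, -, hb, -⟩
    · exact Nat.mul_le_mul hA (Nat.le_mul_of_pos_right _ (by omega))
    · exact hb
  have hc : 2 * c ≤ A * c := Nat.mul_le_mul_right c hA
  omega

lemma IsCastlingSeed.onSeededCastlingSeq (h : IsCastlingSeed A b c) :
    OnSeededCastlingSeq A b c :=
  ⟨b, c, 0, h, rfl, rfl⟩

lemma OnSeededCastlingSeq.next (h : OnSeededCastlingSeq A b c) :
    OnSeededCastlingSeq A c (A * c - b) := by
  obtain ⟨b₀, c₀, i, hseed, rfl, rfl⟩ := h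
  exact ⟨b₀, c₀, i + 1, hseed, rfl, rfl⟩

theorem TriLMEExists.onSeededCastlingSeq (hA : 2 ≤ A) (hbc : b ≤ c) (h : TriLMEExists A b c)
    (hΔ : Dfun ![A, b, c] < 0) : OnSeededCastlingSeq A b c := by
  induction c using Nat.strong_induction_on generalizing b with
  | h c ih =>
    have hb : 0 < b := h.pos.2.1
    rcases h.le_mul.eq_or_lt with hc | hlt
    · exact IsCastlingSeed.onSeededCastlingSeq (.inl ⟨b, hb, rfl, hc.trans (mul_comm A b)⟩)
    by_cases hc : 2 * c ≤ A * b
    · exact IsCastlingSeed.onSeededCastlingSeq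
        (.inr (h.sApair hΔ (Nat.mul_le_mul hA hbc) hc))
    obtain ⟨e, he⟩ := Nat.exists_eq_add_of_le hlt.le
    have hcastled : TriLMEExists A e b := (h.castling (by omega) he.symm).swap_right
    have hΔ' : Dfun ![A, e, b] < 0 := (Dfun_castling he.symm).trans_lt hΔ
    have hlast : OnSeededCastlingSeq A e b := by
      rcases le_total e b with heb | hbe
      · have hbc' : b < c := by nlinarith
        exact ih b hbc' heb hcastled hΔ'
      · exact IsCastlingSeed.onSeededCastlingSeq
          (.inr (hcastled.sApair hΔ' (by omega) (Nat.mul_le_mul hA hbe)))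
    have hce : A * b - e = c := by omega
    exact hce ▸ hlast.next

end CastlingSeq

theorem sporadic_fibonacci_general (A d₂ d₃ : ℕ) (hA : 2 ≤ A) (h23 : d₂ ≤ d₃)
    (hex : TriLMEExists A d₂ d₃) (hΔ : Dfun ![A, d₂, d₃] < 0) :
    ∃ (f : ℕ → ℕ) (i : ℕ),
      (∀ j, 1 ≤ j → f (j + 1) + f (j - 1) = A * f j) ∧
      d₂ = f i ∧ d₃ = f (i + 1) ∧
      ((∃ k, 1 ≤ k ∧ f 0 = k ∧ f 1 = k * A) ∨ SApair A (f 0) (f 1)) := by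
  obtain ⟨b₀, c₀, i, hseed, hi, hi'⟩ := hex.onSeededCastlingSeq hA h23 hΔ
  refine ⟨castlingSeq A b₀ c₀, i, fun j hj => ?_, hi, hi', hseed⟩
  obtain ⟨n, rfl⟩ := Nat.exists_eq_add_of_le' hj
  exact castlingSeq_recurrence hA (hseed.add_le hA) n

/-- sporadic nonempty cases with Δ < 0 lie on Fibonacci-like
sequences f(j+1) = A·f(j) − f(j−1) started from (k, kA) or from a pair in S_A. -/
theorem sporadic_fibonacci (A d₂ d₃ : ℕ) (hA : 2 ≤ A) (h12 : A ≤ d₂)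
    (h23 : d₂ ≤ d₃) (hex : TriLMEExists A d₂ d₃)
    (hΔ : Dfun ![A, d₂, d₃] < 0) :
    ∃ (f : ℕ → ℕ) (i : ℕ),
      (∀ j, 1 ≤ j → f (j + 1) + f (j - 1) = A * f j) ∧
      d₂ = f i ∧ d₃ = f (i + 1) ∧
      ((∃ k, 1 ≤ k ∧ f 0 = k ∧ f 1 = k * A) ∨ SApair A (f 0) (f 1)) :=
  sporadic_fibonacci_general A d₂ d₃ hA h23 hex hΔ
end
end
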